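/- arXiv:2102.07538 — 6 statements merged into one kernel-verified Lean document; each statement's English description precedes it below -/
import Mathlib

section
/- Let L > 0, let d, δ, ξ̄ be reals with 0 < d < 1, 0 < δ < √(1−d) and δ/√(1−d) < ξ̄ < 2 − δ/√(1−d), let m₁ > 0 and m₂ be reals with |m₂| ≤ δ·m₁, let r ≤ d and τ > 0 be reals, and set ξ := ξ̄·m₁ and κ := √(1+r²)/(2τ). Let u : [0,L] → ℝ be continuous and let z : [0,L] × [0,1] → ℝ be continuous and continuously differentiable in the second variable with z(x,0) = u(x) for all x ∈ [0,L]. Then −m₁∫₀^L u(x)² dx − m₂∫₀^L z(x,1)u(x) dx − (ξ/2)∫₀^L∫₀^1 (1 − r·y)·∂/∂y(z(x,y)²) dy dx ≤ −m₁(1 − ξ̄/2 − δ/(2√(1−d)))∫₀^L u(x)² dx − m₁(ξ̄(1−r)/2 − δ√(1−d)/2)∫₀^L z(x,1)² dx + κ·ξ·τ·∫₀^L∫₀^1 z(x,y)² dy dx. -/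
open MeasureTheory intervalIntegral

/-!
The identity `(1 - r y) ∂_y ‖z‖² = ∂_y ((1 - r y) ‖z‖²) + r ‖z‖²` turns the transport term of the
generator into boundary terms at `y = 0` and `y = 1`, plus `-(ξ/2) r ∫∫ ‖z‖²`, which
`-r ≤ √(1 + r²)` bounds by the `κ` term. The one remaining indefinite term, `-m₂ ∫ ⟪z(·,1), u⟫`, is
absorbed by Young's inequality with weight `√(1 - d)`: since `1 - r ≥ 1 - d`, the coefficients left
in front of `-∫ ‖u‖²` and `-∫ ‖z(·,1)‖²` are then positive in the regime
`δ/√(1 - d) < ξ̄ < 2 - δ/√(1 - d)`.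
-/

section Young

variable {E : Type*} [NormedAddCommGroup E] [InnerProductSpace ℝ E] {m β s : ℝ}

theorem neg_mul_inner_le_weighted_sq (hs : 0 < s) (hm : |m| ≤ β) (a b : E) :
    -m * inner ℝ a b ≤ β / (2 * s) * ‖b‖ ^ 2 + β * s / 2 * ‖a‖ ^ 2 := by
  have hβ : 0 ≤ β := (abs_nonneg m).trans hm
  calc -m * inner ℝ a b ≤ |m| * |inner ℝ a b| := by
        rw [← abs_neg m, ← abs_mul]
        exact le_abs_self _
    _ ≤ β * (‖a‖ * ‖b‖) := by
        gcongr
        exact abs_real_inner_le_norm a b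
    _ ≤ β * (‖a‖ * ‖b‖) + β / (2 * s) * (‖b‖ - s * ‖a‖) ^ 2 :=
        le_add_of_nonneg_right (by positivity)
    _ = β / (2 * s) * ‖b‖ ^ 2 + β * s / 2 * ‖a‖ ^ 2 := by
        field_simp
        ring

theorem neg_mul_integral_inner_le_weighted_sq {μ : Measure ℝ} {a b : ℝ} {f g : ℝ → E}
    (hab : a ≤ b) (hs : 0 < s) (hm : |m| ≤ β)
    (hf : IntervalIntegrable (fun x => ‖f x‖ ^ 2) μ a b)
    (hg : IntervalIntegrable (fun x => ‖g x‖ ^ 2) μ a b)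
    (hfg : IntervalIntegrable (fun x => inner ℝ (f x) (g x)) μ a b) :
    -m * ∫ x in a..b, inner ℝ (f x) (g x) ∂μ
      ≤ β / (2 * s) * (∫ x in a..b, ‖g x‖ ^ 2 ∂μ)
        + β * s / 2 * ∫ x in a..b, ‖f x‖ ^ 2 ∂μ := by
  simp only [← intervalIntegral.integral_const_mul]
  rw [← integral_add (hg.const_mul _) (hf.const_mul _)]
  exact integral_mono_on hab (hfg.const_mul _) ((hg.const_mul _).add (hf.const_mul _))
    fun x _ => neg_mul_inner_le_weighted_sq hs hm (f x) (g x)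

end Young

section IntegrationByParts

theorem integral_one_sub_mul_mul_deriv {φ : ℝ → ℝ} {a b : ℝ} (r : ℝ)
    (hφ : ContinuousOn φ (Set.uIcc a b))
    (hdiff : ∀ y ∈ Set.Ioo (min a b) (max a b), DifferentiableAt ℝ φ y)
    (hint : IntervalIntegrable (deriv φ) volume a b) :
    ∫ y in a..b, (1 - r * y) * deriv φ y
      = (1 - r * b) * φ b - (1 - r * a) * φ a + r * ∫ y in a..b, φ y := by
  have hweight (y : ℝ) : HasDerivAt (fun y => 1 - r * y) (-r) y := by
    simpa using ((hasDerivAt_id y).const_mul r).const_sub 1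
  rw [integral_mul_deriv_eq_deriv_mul_of_hasDerivAt (by fun_prop) hφ (fun y _ => hweight y)
    (fun y hy => (hdiff y hy).hasDerivAt) intervalIntegrable_const hint,
    intervalIntegral.integral_const_mul, neg_mul, sub_neg_eq_add]

variable {E : Type*} [NormedAddCommGroup E] [InnerProductSpace ℝ E]

theorem intervalIntegrable_deriv_norm_sq {f : ℝ → E} {a b : ℝ}
    (hf : ContinuousOn f (Set.uIcc a b))
    (hdiff : ∀ y ∈ Set.Ioo (min a b) (max a b), DifferentiableAt ℝ f y)
    (hint : IntervalIntegrable (deriv f) volume a b) :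
    IntervalIntegrable (deriv fun y => ‖f y‖ ^ 2) volume a b := by
  obtain ⟨C, hC⟩ := isCompact_uIcc.exists_bound_of_continuousOn hf
  have hinner : IntervalIntegrable (fun y => 2 * inner ℝ (f y) (deriv f y)) volume a b := by
    refine IntervalIntegrable.const_mul ?_ 2
    rw [intervalIntegrable_iff] at hint ⊢
    refine (innerSL ℝ).integrable_of_bilin_of_bdd_left C ?_ ?_ hint
    · exact (hf.mono Set.uIoc_subset_uIcc).aestronglyMeasurable measurableSet_uIoc
    · exact ae_restrict_of_forall_mem measurableSet_uIoc
        fun y hy => hC y (Set.uIoc_subset_uIcc hy)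
  refine hinner.congr_uIoo fun y hy => ?_
  exact (hdiff y hy).hasDerivAt.norm_sq.deriv.symm

end IntegrationByParts

theorem intervalIntegrable_intervalIntegral_of_continuousOn_prod
    {E : Type*} [NormedAddCommGroup E] [NormedSpace ℝ E] {F : ℝ × ℝ → E} {a b c d : ℝ}
    (hF : ContinuousOn F (Set.uIcc a b ×ˢ Set.uIcc c d)) :
    IntervalIntegrable (fun x => ∫ y in c..d, F (x, y)) volume a b := by
  have hprod : Integrable F
      ((volume.restrict (Set.uIoc a b)).prod (volume.restrict (Set.uIoc c d))) := by
    rw [Measure.prod_restrict]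
    exact (hF.integrableOn_compact (isCompact_uIcc.prod isCompact_uIcc)).mono_set
      (Set.prod_mono Set.uIoc_subset_uIcc Set.uIoc_subset_uIcc)
  simp only [intervalIntegrable_iff, intervalIntegral_eq_integral_uIoc]
  exact hprod.integral_prod_left.smul _

section Dissipativity

variable {E : Type*} [NormedAddCommGroup E] [InnerProductSpace ℝ E]

theorem integral_integral_one_sub_mul_mul_deriv_norm_sq {z : ℝ → ℝ → E} {a b c d : ℝ} (r : ℝ)
    (hz : ContinuousOn (fun q : ℝ × ℝ => z q.1 q.2) (Set.uIcc a b ×ˢ Set.uIcc c d))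
    (hzdiff : ∀ x ∈ Set.uIcc a b, ∀ y ∈ Set.Ioo (min c d) (max c d), DifferentiableAt ℝ (z x) y)
    (hzy : ∀ x ∈ Set.uIcc a b, IntervalIntegrable (deriv (z x)) volume c d) :
    ∫ x in a..b, ∫ y in c..d, (1 - r * y) * deriv (fun w => ‖z x w‖ ^ 2) y
      = (1 - r * d) * (∫ x in a..b, ‖z x d‖ ^ 2) - (1 - r * c) * (∫ x in a..b, ‖z x c‖ ^ 2)
        + r * ∫ x in a..b, ∫ y in c..d, ‖z x y‖ ^ 2 := by
  have hslice {y : ℝ} (hy : y ∈ Set.uIcc c d) (k : ℝ) :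
      IntervalIntegrable (fun x => k * ‖z x y‖ ^ 2) volume a b :=
    ((hz.uncurry_right y hy).norm.pow 2).intervalIntegrable.const_mul k
  have hmass : IntervalIntegrable (fun x => r * ∫ y in c..d, ‖z x y‖ ^ 2) volume a b :=
    (intervalIntegrable_intervalIntegral_of_continuousOn_prod (hz.norm.pow 2)).const_mul r
  have hparts : ∀ x ∈ Set.uIcc a b,
      ∫ y in c..d, (1 - r * y) * deriv (fun w => ‖z x w‖ ^ 2) y
        = (1 - r * d) * ‖z x d‖ ^ 2 - (1 - r * c) * ‖z x c‖ ^ 2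
          + r * ∫ y in c..d, ‖z x y‖ ^ 2 := fun x hx =>
    have hzx : ContinuousOn (z x) (Set.uIcc c d) := hz.uncurry_left x hx
    integral_one_sub_mul_mul_deriv r (hzx.norm.pow 2)
      (fun y hy => (hzdiff x hx y hy).norm_sq ℝ)
      (intervalIntegrable_deriv_norm_sq hzx (hzdiff x hx) (hzy x hx))
  rw [integral_congr hparts, integral_add ((hslice Set.right_mem_uIcc _).sub
    (hslice Set.left_mem_uIcc _)) hmass, integral_sub (hslice Set.right_mem_uIcc _)
    (hslice Set.left_mem_uIcc _)]
  simp only [intervalIntegral.integral_const_mul]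

theorem generator_dissipativity_estimate_general {L d δ ξbar m₁ m₂ τ : ℝ} (r : ℝ)
    (hL : 0 ≤ L) (hd : d < 1) (hξ : 0 ≤ ξbar * m₁) (hm : |m₂| ≤ δ * m₁) (hτ : τ ≠ 0)
    {u : ℝ → E} {z : ℝ → ℝ → E}
    (hz : ContinuousOn (fun q : ℝ × ℝ => z q.1 q.2) (Set.Icc 0 L ×ˢ Set.Icc 0 1))
    (hzdiff : ∀ x ∈ Set.Icc (0:ℝ) L, ∀ y ∈ Set.Ioo (0:ℝ) 1, DifferentiableAt ℝ (z x) y)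
    (hzy : ∀ x ∈ Set.Icc (0:ℝ) L, IntervalIntegrable (deriv (z x)) volume 0 1)
    (hz0 : ∀ x ∈ Set.Icc (0:ℝ) L, z x 0 = u x) :
    -m₁ * (∫ x in (0:ℝ)..L, ‖u x‖ ^ 2)
      - m₂ * (∫ x in (0:ℝ)..L, inner ℝ (z x 1) (u x))
      - (ξbar * m₁ / 2) *
          (∫ x in (0:ℝ)..L, ∫ y in (0:ℝ)..1, (1 - r * y) * deriv (fun w => ‖z x w‖ ^ 2) y)
    ≤ -m₁ * (1 - ξbar / 2 - δ / (2 * √(1 - d))) * (∫ x in (0:ℝ)..L, ‖u x‖ ^ 2)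
        - m₁ * (ξbar * (1 - r) / 2 - δ * √(1 - d) / 2) * (∫ x in (0:ℝ)..L, ‖z x 1‖ ^ 2)
        + (√(1 + r ^ 2) / (2 * τ)) * (ξbar * m₁) * τ *
            (∫ x in (0:ℝ)..L, ∫ y in (0:ℝ)..1, ‖z x y‖ ^ 2) := by
  have hs : 0 < √(1 - d) := Real.sqrt_pos.2 (sub_pos.2 hd)
  have hz1 : ContinuousOn (fun x => z x 1) (Set.Icc 0 L) :=
    hz.uncurry_right 1 (Set.right_mem_Icc.2 zero_le_one)
  have hu : ContinuousOn u (Set.Icc 0 L) :=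
    (hz.uncurry_right 0 (Set.left_mem_Icc.2 zero_le_one)).congr fun x hx => (hz0 x hx).symm
  have hcross : -m₂ * ∫ x in (0:ℝ)..L, inner ℝ (z x 1) (u x)
      ≤ δ * m₁ / (2 * √(1 - d)) * (∫ x in (0:ℝ)..L, ‖u x‖ ^ 2)
        + δ * m₁ * √(1 - d) / 2 * ∫ x in (0:ℝ)..L, ‖z x 1‖ ^ 2 :=
    neg_mul_integral_inner_le_weighted_sq hL hs hm
      ((hz1.norm.pow 2).intervalIntegrable_of_Icc hL)
      ((hu.norm.pow 2).intervalIntegrable_of_Icc hL)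
      ((hz1.inner hu).intervalIntegrable_of_Icc hL)
  have htransport :
      ∫ x in (0:ℝ)..L, ∫ y in (0:ℝ)..1, (1 - r * y) * deriv (fun w => ‖z x w‖ ^ 2) y
        = (1 - r) * (∫ x in (0:ℝ)..L, ‖z x 1‖ ^ 2) - (∫ x in (0:ℝ)..L, ‖u x‖ ^ 2)
          + r * ∫ x in (0:ℝ)..L, ∫ y in (0:ℝ)..1, ‖z x y‖ ^ 2 := by
    have hinflow : ∫ x in (0:ℝ)..L, ‖z x 0‖ ^ 2 = ∫ x in (0:ℝ)..L, ‖u x‖ ^ 2 :=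
      integral_congr fun x hx => by simp only [hz0 x (Set.uIcc_of_le hL ▸ hx)]
    rw [integral_integral_one_sub_mul_mul_deriv_norm_sq r (by simpa [hL] using hz)
      (by simpa [hL] using hzdiff) (by simpa [hL] using hzy), hinflow]
    ring
  have hmass : 0 ≤ ∫ x in (0:ℝ)..L, ∫ y in (0:ℝ)..1, ‖z x y‖ ^ 2 :=
    integral_nonneg hL fun x _ => integral_nonneg zero_le_one fun y _ => by positivity
  have hr : -r ≤ √(1 + r ^ 2) := (neg_le_abs r).trans (Real.abs_le_sqrt (by linarith))
  have hκ : √(1 + r ^ 2) / (2 * τ) * (ξbar * m₁) * τ = √(1 + r ^ 2) * (ξbar * m₁ / 2) := by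
    field_simp
  rw [htransport, hκ]
  have hdelay := mul_le_mul_of_nonneg_right hr (mul_nonneg (div_nonneg hξ two_pos.le) hmass)
  linear_combination hcross + hdelay

end Dissipativity

/-- Dissipativity estimate `⟨A(t)U,U⟩_t ≤ κ(t)⟨U,U⟩_t` for the generator of the
piezoelectric beam system with time-varying delay (analytic content). -/
theorem generator_dissipativity_estimate
    (L d δ ξbar m₁ m₂ r τ : ℝ)
    (hL : 0 < L) (hd0 : 0 < d) (hd1 : d < 1)
    (hδ0 : 0 < δ) (hδ : δ < Real.sqrt (1 - d))
    (hξ1 : δ / Real.sqrt (1 - d) < ξbar) (hξ2 : ξbar < 2 - δ / Real.sqrt (1 - d))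
    (hm1 : 0 < m₁) (hm2 : |m₂| ≤ δ * m₁)
    (hr : r ≤ d) (hτ : 0 < τ)
    (u : ℝ → ℝ) (z : ℝ → ℝ → ℝ)
    (hu : ContinuousOn u (Set.Icc 0 L))
    (hz : ContinuousOn (fun q : ℝ × ℝ => z q.1 q.2) (Set.Icc 0 L ×ˢ Set.Icc 0 1))
    (hzdiff : ∀ x ∈ Set.Icc (0:ℝ) L, ∀ y ∈ Set.Icc (0:ℝ) 1, DifferentiableAt ℝ (z x) y)
    (hzy : ContinuousOn (fun q : ℝ × ℝ => deriv (z q.1) q.2) (Set.Icc 0 L ×ˢ Set.Icc 0 1))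
    (hz0 : ∀ x ∈ Set.Icc (0:ℝ) L, z x 0 = u x) :
    -m₁ * (∫ x in (0:ℝ)..L, (u x) ^ 2)
      - m₂ * (∫ x in (0:ℝ)..L, z x 1 * u x)
      - (ξbar * m₁ / 2) *
          (∫ x in (0:ℝ)..L, ∫ y in (0:ℝ)..1, (1 - r * y) * deriv (fun w => (z x w) ^ 2) y)
    ≤ -m₁ * (1 - ξbar / 2 - δ / (2 * Real.sqrt (1 - d))) * (∫ x in (0:ℝ)..L, (u x) ^ 2)
        - m₁ * (ξbar * (1 - r) / 2 - δ * Real.sqrt (1 - d) / 2) *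
            (∫ x in (0:ℝ)..L, (z x 1) ^ 2)
        + (Real.sqrt (1 + r ^ 2) / (2 * τ)) * (ξbar * m₁) * τ *
            (∫ x in (0:ℝ)..L, ∫ y in (0:ℝ)..1, (z x y) ^ 2) := by
  have hξ : 0 < ξbar := (div_pos hδ0 (hδ0.trans hδ)).trans hξ1
  have hzy' : ∀ x ∈ Set.Icc (0:ℝ) L, IntervalIntegrable (deriv (z x)) volume 0 1 := fun x hx =>
    (ContinuousOn.uncurry_left (f := fun x => deriv (z x)) x hx hzy).intervalIntegrable_of_Icc
      zero_le_one
  simpa only [Real.norm_eq_abs, sq_abs, RCLike.inner_apply', conj_trivial] using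
    generator_dissipativity_estimate_general r hL.le hd1 (mul_pos hξ hm1).le hm2 hτ.ne' hz
      (fun x hx y hy => hzdiff x hx y (Set.Ioo_subset_Icc_self hy)) hzy' hz0
end

section
/- Let L > 0, let τ, ξ : [0,∞) → ℝ be continuously differentiable with τ(t) > 0 for all t, let w : [0,L] × [0,∞) → ℝ be continuous, and let z : [0,L] × [0,1] × [0,∞) → ℝ be continuously differentiable satisfying τ(t)·z_t(x,y,t) + (1 − τ'(t)y)·z_y(x,y,t) = 0 and z(x,0,t) = w(x,t) for all (x,y,t). Then for every t > 0, d/dt [ (ξ(t)τ(t)/2)·∫₀^L∫₀^1 z(x,y,t)² dy dx ] = (ξ(t)/2)∫₀^L w(x,t)² dx − (ξ(t)(1 − τ'(t))/2)∫₀^L z(x,1,t)² dx + (ξ'(t)τ(t)/2)∫₀^L∫₀^1 z(x,y,t)² dy dx. -/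
open MeasureTheory intervalIntegral

/-!
The weight `τ` in front of the delay energy is what makes its derivative computable: at time `t`,
`τ ∫ 2⟪z, z_t⟫ dy` may be rewritten by the transport equation as `-∫ (1 - τ' y) ∂_y ‖z‖² dy`, and an
integration by parts turns this into boundary terms at `y = 0` and `y = 1` plus `-τ' ∫ ‖z‖² dy`.
The last term cancels the one coming from differentiating the factor `τ`, leaving only `ξ'`.
-/

open scoped RealInnerProductSpace Interval

section ParametricIntegral

variable {𝕜 X Y E : Type*} [RCLike 𝕜] [TopologicalSpace X] [T2Space X] [MeasurableSpace X]
  [OpensMeasurableSpace X] {μ : Measure X} [IsFiniteMeasureOnCompacts μ]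
  [NormedAddCommGroup E] [NormedSpace ℝ E] [NormedSpace 𝕜 E]

theorem hasDerivAt_setIntegral_of_continuous_deriv {K : Set X} (hK : IsCompact K)
    {F F' : 𝕜 → X → E} (hF : ∀ s, Continuous (F s)) (hF' : Continuous F'.uncurry)
    (hderiv : ∀ s, ∀ x ∈ K, HasDerivAt (F · x) (F' s x) s) (t : 𝕜) :
    HasDerivAt (fun s ↦ ∫ x in K, F s x ∂μ) (∫ x in K, F' t x ∂μ) t := by
  have aestronglyMeasurable {f : X → E} (hf : Continuous f) :
      AEStronglyMeasurable f (μ.restrict K) :=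
    hf.continuousOn.aestronglyMeasurable_of_isCompact hK hK.measurableSet
  obtain ⟨C, hC⟩ := ((isCompact_closedBall t 1).prod hK).exists_bound_of_continuousOn
    hF'.continuousOn
  refine (hasDerivAt_integral_of_dominated_loc_of_deriv_le (bound := fun _ ↦ C)
    (Metric.closedBall_mem_nhds t one_pos) (.of_forall fun s ↦ aestronglyMeasurable (hF s))
    ((hF t).continuousOn.integrableOn_compact hK)
    (aestronglyMeasurable (hF'.uncurry_left t)) ?_
    (integrableOn_const hK.measure_ne_top) ?_).2
  · exact ae_restrict_of_forall_mem hK.measurableSet fun x hx s hs ↦ hC (s, x) ⟨hs, hx⟩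
  · exact ae_restrict_of_forall_mem hK.measurableSet fun x hx s _ ↦ hderiv s x hx

theorem hasDerivAt_setIntegral_setIntegral_of_continuous_deriv
    [FirstCountableTopology X] [LocallyCompactSpace X]
    [TopologicalSpace Y] [T2Space Y] [MeasurableSpace Y] [OpensMeasurableSpace Y]
    [SecondCountableTopologyEither Y E] {ν : Measure Y} [IsLocallyFiniteMeasure ν]
    {K : Set X} (hK : IsCompact K) {K' : Set Y} (hK' : IsCompact K') {F F' : X → Y → 𝕜 → E}
    (hF : Continuous fun q : X × Y × 𝕜 ↦ F q.1 q.2.1 q.2.2)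
    (hF' : Continuous fun q : X × Y × 𝕜 ↦ F' q.1 q.2.1 q.2.2)
    (hderiv : ∀ x ∈ K, ∀ y ∈ K', ∀ s, HasDerivAt (F x y) (F' x y s) s) (t : 𝕜) :
    HasDerivAt (fun s ↦ ∫ x in K, ∫ y in K', F x y s ∂ν ∂μ)
      (∫ x in K, ∫ y in K', F' x y t ∂ν ∂μ) t := by
  refine hasDerivAt_setIntegral_of_continuous_deriv hK (F := fun s x ↦ ∫ y in K', F x y s ∂ν)
    (F' := fun s x ↦ ∫ y in K', F' x y s ∂ν) (fun s ↦ ?_) ?_ (fun s x hx ↦ ?_) t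
  · exact continuous_parametric_integral_of_continuous (f := fun x y ↦ F x y s) (by fun_prop) hK'
  · exact continuous_parametric_integral_of_continuous
      (f := fun (p : 𝕜 × X) y ↦ F' p.2 y p.1) (by fun_prop) hK'
  · exact hasDerivAt_setIntegral_of_continuous_deriv hK' (F := fun s y ↦ F x y s)
      (F' := fun s y ↦ F' x y s) (by fun_prop) (by fun_prop) (fun s y hy ↦ hderiv x hx y hy s) s

end ParametricIntegral

section Transport

variable {E : Type*} [NormedAddCommGroup E] [InnerProductSpace ℝ E] {a b τ : ℝ} {φ φ' : ℝ → ℝ}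

theorem integral_mul_two_mul_inner_deriv {u u' : ℝ → E}
    (hφ : ∀ y ∈ [[a, b]], HasDerivAt φ (φ' y) y) (hφ' : IntervalIntegrable φ' volume a b)
    (hu : ∀ y ∈ [[a, b]], HasDerivAt u (u' y) y) (hu' : ContinuousOn u' [[a, b]]) :
    ∫ y in a..b, φ y * (2 * ⟪u y, u' y⟫) =
      φ b * ‖u b‖ ^ 2 - φ a * ‖u a‖ ^ 2 - ∫ y in a..b, φ' y * ‖u y‖ ^ 2 := by
  have hu_cont : ContinuousOn u [[a, b]] := HasDerivAt.continuousOn hu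
  exact integral_mul_deriv_eq_deriv_mul hφ (fun y hy ↦ (hu y hy).norm_sq) hφ'
    ((hu_cont.inner hu').const_smul (2 : ℝ)).intervalIntegrable

theorem mul_integral_two_mul_inner_of_transport {u v u' : ℝ → E}
    (hφ : ∀ y ∈ [[a, b]], HasDerivAt φ (φ' y) y) (hφ' : IntervalIntegrable φ' volume a b)
    (hu : ∀ y ∈ [[a, b]], HasDerivAt u (u' y) y) (hu' : ContinuousOn u' [[a, b]])
    (htransport : ∀ y ∈ [[a, b]], τ • v y + φ y • u' y = 0) :
    τ * ∫ y in a..b, 2 * ⟪u y, v y⟫ =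
      φ a * ‖u a‖ ^ 2 - φ b * ‖u b‖ ^ 2 + ∫ y in a..b, φ' y * ‖u y‖ ^ 2 := by
  have pointwise : ∀ y ∈ [[a, b]], τ * (2 * ⟪u y, v y⟫) = -(φ y * (2 * ⟪u y, u' y⟫)) := by
    intro y hy
    have h : τ * ⟪u y, v y⟫ + φ y * ⟪u y, u' y⟫ = 0 := by
      simpa only [inner_add_right, real_inner_smul_right, inner_zero_right] using
        congrArg (⟪u y, ·⟫) (htransport y hy)
    linear_combination 2 * h
  calc τ * ∫ y in a..b, 2 * ⟪u y, v y⟫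
    _ = -∫ y in a..b, φ y * (2 * ⟪u y, u' y⟫) := by
      rw [← intervalIntegral.integral_const_mul, ← intervalIntegral.integral_neg]
      exact integral_congr pointwise
    _ = _ := by rw [integral_mul_two_mul_inner_deriv hφ hφ' hu hu']; ring

theorem mul_setIntegral_integral_two_mul_inner_of_transport
    {X : Type*} [TopologicalSpace X] [T2Space X] [FirstCountableTopology X] [MeasurableSpace X]
    [OpensMeasurableSpace X] {μ : Measure X} [IsFiniteMeasureOnCompacts μ]
    {K : Set X} (hK : IsCompact K) {u v u' : X → ℝ → E}
    (hφ : ∀ y ∈ [[a, b]], HasDerivAt φ (φ' y) y) (hφ' : Continuous φ')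
    (hu_cont : Continuous u.uncurry) (hu : ∀ x ∈ K, ∀ y ∈ [[a, b]], HasDerivAt (u x) (u' x y) y)
    (hu' : ∀ x ∈ K, ContinuousOn (u' x) [[a, b]])
    (htransport : ∀ x ∈ K, ∀ y ∈ [[a, b]], τ • v x y + φ y • u' x y = 0) :
    τ * ∫ x in K, (∫ y in a..b, 2 * ⟪u x y, v x y⟫) ∂μ =
      φ a * (∫ x in K, ‖u x a‖ ^ 2 ∂μ) - φ b * (∫ x in K, ‖u x b‖ ^ 2 ∂μ)
        + ∫ x in K, (∫ y in a..b, φ' y * ‖u x y‖ ^ 2) ∂μ := by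
  have integrable_boundary : IntegrableOn (fun x ↦ φ a * ‖u x a‖ ^ 2 - φ b * ‖u x b‖ ^ 2) K μ :=
    ContinuousOn.integrableOn_compact hK (by fun_prop)
  have integrable_interior : IntegrableOn (fun x ↦ ∫ y in a..b, φ' y * ‖u x y‖ ^ 2) K μ :=
    (Continuous.continuousOn (by fun_prop)).integrableOn_compact hK
  simp only [← MeasureTheory.integral_const_mul]
  rw [← MeasureTheory.integral_sub (ContinuousOn.integrableOn_compact hK (by fun_prop))
    (ContinuousOn.integrableOn_compact hK (by fun_prop)),
    ← MeasureTheory.integral_add integrable_boundary integrable_interior]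
  refine setIntegral_congr_fun hK.measurableSet fun x hx ↦ ?_
  simpa only [intervalIntegral.integral_const_mul] using mul_integral_two_mul_inner_of_transport
    hφ (hφ'.intervalIntegrable a b) (hu x hx) (hu' x hx) (htransport x hx)

end Transport

theorem delay_energy_time_derivative_general
    {X E : Type*} [TopologicalSpace X] [T2Space X] [FirstCountableTopology X]
    [LocallyCompactSpace X] [MeasurableSpace X] [OpensMeasurableSpace X]
    {μ : Measure X} [IsFiniteMeasureOnCompacts μ]
    [NormedAddCommGroup E] [InnerProductSpace ℝ E]
    {K : Set X} (hK : IsCompact K) {τ ξ : ℝ → ℝ} {t τ' ξ' : ℝ}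
    (hτ : HasDerivAt τ τ' t) (hξ : HasDerivAt ξ ξ' t)
    {w : X → E} {z zt : X → ℝ → ℝ → E} {zy : X → ℝ → E}
    (hz_cont : Continuous fun q : X × ℝ × ℝ ↦ z q.1 q.2.1 q.2.2)
    (hzt_cont : Continuous fun q : X × ℝ × ℝ ↦ zt q.1 q.2.1 q.2.2)
    (hzy_cont : ∀ x ∈ K, ContinuousOn (zy x) (Set.Icc 0 1))
    (hzt : ∀ x ∈ K, ∀ y ∈ Set.Icc (0 : ℝ) 1, ∀ s, HasDerivAt (z x y) (zt x y s) s)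
    (hzy : ∀ x ∈ K, ∀ y ∈ Set.Icc (0 : ℝ) 1, HasDerivAt (z x · t) (zy x y) y)
    (hpde : ∀ x ∈ K, ∀ y ∈ Set.Icc (0 : ℝ) 1, τ t • zt x y t + (1 - τ' * y) • zy x y = 0)
    (hcomp : ∀ x ∈ K, z x 0 t = w x) :
    HasDerivAt (fun s ↦ (ξ s * τ s / 2) * ∫ x in K, (∫ y in (0 : ℝ)..1, ‖z x y s‖ ^ 2) ∂μ)
      ((ξ t / 2) * (∫ x in K, ‖w x‖ ^ 2 ∂μ)
        - (ξ t * (1 - τ') / 2) * (∫ x in K, ‖z x 1 t‖ ^ 2 ∂μ)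
        + (ξ' * τ t / 2) * ∫ x in K, (∫ y in (0 : ℝ)..1, ‖z x y t‖ ^ 2) ∂μ) t := by
  have energy_deriv : HasDerivAt (fun s ↦ ∫ x in K, (∫ y in (0 : ℝ)..1, ‖z x y s‖ ^ 2) ∂μ)
      (∫ x in K, (∫ y in (0 : ℝ)..1, 2 * ⟪z x y t, zt x y t⟫) ∂μ) t := by
    simp only [integral_of_le zero_le_one, ← integral_Icc_eq_integral_Ioc]
    exact hasDerivAt_setIntegral_setIntegral_of_continuous_deriv hK isCompact_Icc (by fun_prop)
      (F' := fun x y s ↦ 2 * ⟪z x y s, zt x y s⟫) (by fun_prop)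
      (fun x hx y hy s ↦ (hzt x hx y hy s).norm_sq) t
  have hw : ∫ x in K, ‖z x 0 t‖ ^ 2 ∂μ = ∫ x in K, ‖w x‖ ^ 2 ∂μ :=
    setIntegral_congr_fun hK.measurableSet fun x hx ↦ by simp only [hcomp x hx]
  have hspeed (y : ℝ) : HasDerivAt (fun y ↦ 1 - τ' * y) (-τ') y := by
    simpa using ((hasDerivAt_id y).const_mul τ').const_sub 1
  rw [← Set.uIcc_of_le zero_le_one] at hzy_cont hzy hpde
  have balance := mul_setIntegral_integral_two_mul_inner_of_transport (μ := μ) hK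
    (u := (z · · t)) (v := (zt · · t)) (fun y _ ↦ hspeed y) continuous_const (by fun_prop)
    hzy hzy_cont hpde
  simp only [intervalIntegral.integral_const_mul, MeasureTheory.integral_const_mul, hw]
    at energy_deriv balance
  refine (((hξ.mul hτ).div_const 2).mul energy_deriv).congr_deriv ?_
  simp only [Pi.mul_apply]
  linear_combination (ξ t / 2) * balance

/-- Time derivative of the delay part of the energy: if `z` solves the transport
equation `τ(t)z_t + (1 − τ'(t)y)z_y = 0` with `z(x,0,t) = w(x,t)`, then
`d/dt [(ξ(t)τ(t)/2)∫∫z²] = (ξ/2)∫w² − (ξ(1−τ')/2)∫z(·,1)² + (ξ'τ/2)∫∫z²`. -/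
theorem delay_energy_time_derivative
    (L : ℝ) (hL : 0 < L) (τ ξ : ℝ → ℝ)
    (hτ : ContDiff ℝ 1 τ) (hξ : ContDiff ℝ 1 ξ)
    (hτpos : ∀ t, 0 ≤ t → 0 < τ t)
    (w : ℝ → ℝ → ℝ)
    (hw : Continuous fun q : ℝ × ℝ => w q.1 q.2)
    (z : ℝ → ℝ → ℝ → ℝ)
    (hz : ContDiff ℝ 1 fun q : ℝ × ℝ × ℝ => z q.1 q.2.1 q.2.2)
    (hpde : ∀ x ∈ Set.Icc (0:ℝ) L, ∀ y ∈ Set.Icc (0:ℝ) 1, ∀ t, 0 ≤ t →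
      τ t * deriv (fun s => z x y s) t
        + (1 - deriv τ t * y) * deriv (fun w' => z x w' t) y = 0)
    (hcomp : ∀ x ∈ Set.Icc (0:ℝ) L, ∀ t, 0 ≤ t → z x 0 t = w x t) :
    ∀ t, 0 < t →
      HasDerivAt
        (fun s => (ξ s * τ s / 2) * ∫ x in (0:ℝ)..L, ∫ y in (0:ℝ)..1, (z x y s) ^ 2)
        ((ξ t / 2) * (∫ x in (0:ℝ)..L, (w x t) ^ 2)
          - (ξ t * (1 - deriv τ t) / 2) * (∫ x in (0:ℝ)..L, (z x 1 t) ^ 2)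
          + (deriv ξ t * τ t / 2) * ∫ x in (0:ℝ)..L, ∫ y in (0:ℝ)..1, (z x y t) ^ 2)
        t := by
  intro t ht
  have hzt (x y : ℝ) : Differentiable ℝ (z x y) := by
    have := hz.differentiable one_ne_zero
    fun_prop
  have hzy (x : ℝ) : ContDiff ℝ 1 (z x · t) := by fun_prop
  have hzt_cont : Continuous fun q : ℝ × ℝ × ℝ ↦ deriv (z q.1 q.2.1) q.2.2 := by
    unfold deriv; fun_prop
  simpa only [integral_of_le hL.le, ← integral_Icc_eq_integral_Ioc, Real.norm_eq_abs, sq_abs] using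
    delay_energy_time_derivative_general isCompact_Icc
      (hτ.differentiable one_ne_zero t).hasDerivAt (hξ.differentiable one_ne_zero t).hasDerivAt
      hz.continuous hzt_cont (fun x _ ↦ (hzy x).continuous_deriv_one.continuousOn)
      (fun x _ y _ s ↦ (hzt x y s).hasDerivAt)
      (fun x _ y _ ↦ ((hzy x).differentiable one_ne_zero y).hasDerivAt)
      (fun x hx y hy ↦ hpde x hx y hy t ht.le) (fun x hx ↦ hcomp x hx t ht.le)
end

section
/- (Lemma 4.1: Energy dissipation.) Let (v,p,z) be a classical solution of the piezoelectric beam system with magnetic effect and time-varying delay, under assumptions (A1)–(A3) and with ξ̄ ∈ (δ/√(1−d), 2 − δ/√(1−d)), ξ(t) := ξ̄μ₁(t). Then the energy E(t) is differentiable and satisfies, for all t > 0, E'(t) ≤ −μ₁(t)·(1 − ξ̄/2 − δ/(2√(1−d)))·∫₀^L v_t(x,t)² dx − μ₁(t)·(ξ̄(1 − τ'(t))/2 − δ√(1−d)/2)·∫₀^L z(x,1,t)² dx ≤ 0. In particular E is nonincreasing. -/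
open MeasureTheory intervalIntegral

/-- Partial derivative of `f : ℝ → ℝ → ℝ` with respect to its first argument. -/
noncomputable def pd1 (f : ℝ → ℝ → ℝ) (x t : ℝ) : ℝ := deriv (fun ξ => f ξ t) x

/-- Partial derivative of `f : ℝ → ℝ → ℝ` with respect to its second argument. -/
noncomputable def pd2 (f : ℝ → ℝ → ℝ) (x t : ℝ) : ℝ := deriv (f x) t

/-- Partial derivative of `z : ℝ → ℝ → ℝ → ℝ` with respect to its second argument. -/
noncomputable def pdy (z : ℝ → ℝ → ℝ → ℝ) (x y t : ℝ) : ℝ := deriv (fun w => z x w t) y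

/-- Partial derivative of `z : ℝ → ℝ → ℝ → ℝ` with respect to its third argument. -/
noncomputable def pdt (z : ℝ → ℝ → ℝ → ℝ) (x y t : ℝ) : ℝ := deriv (z x y) t

/-!
The mechanical energy changes only through the power `∫ v_t (ρ v_tt - …) + p_t (μ p_tt - …)` of the
unbalanced forces, because the boundary terms `[v_t (α v_x - γβ p_x) + p_t (β p_x - γβ v_x)]` of the
integration by parts vanish. By the equations of motion this power is
`-μ₁ ∫ v_t² - μ₂ ∫ v_t z(·,1)`. The transport equation makes
`∂_t (τ z²) = -∂_y ((1 - τ' y) z²)`, so the delay term `τ ∫∫ z²` gains `∫ v_t²` at the inlet `y = 0`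
and loses `(1 - τ') ∫ z(·,1)²` at the outlet `y = 1`. Young's inequality with weight `√(1 - d)`
distributes the cross term over these two quadratic terms, and the condition on `ξ̄` keeps both
resulting coefficients nonnegative; the weight `ξ = ξ̄ μ₁` being nonincreasing only helps.
-/

open Set Filter Topology

section PartialDerivatives

variable {f : ℝ → ℝ → ℝ} {m n : WithTop ℕ∞}

lemma hasDerivAt_pd1 (hf : Differentiable ℝ fun q : ℝ × ℝ => f q.1 q.2) (x t : ℝ) :
    HasDerivAt (fun ξ => f ξ t) (pd1 f x t) x :=
  (hf.comp (g := fun q : ℝ × ℝ => f q.1 q.2) (f := fun ξ : ℝ => (ξ, t)) (by fun_prop)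
    x).hasDerivAt

lemma hasDerivAt_pd2 (hf : Differentiable ℝ fun q : ℝ × ℝ => f q.1 q.2) (x t : ℝ) :
    HasDerivAt (f x) (pd2 f x t) t :=
  (hf.comp (g := fun q : ℝ × ℝ => f q.1 q.2) (f := fun s : ℝ => (x, s)) (by fun_prop)
    t).hasDerivAt

lemma pd1_eq_fderiv (hf : Differentiable ℝ fun q : ℝ × ℝ => f q.1 q.2) (x t : ℝ) :
    pd1 f x t = fderiv ℝ (fun q : ℝ × ℝ => f q.1 q.2) (x, t) (1, 0) :=
  ((hf (x, t)).hasFDerivAt.comp_hasDerivAt (f := fun ξ : ℝ => (ξ, t)) x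
    ((hasDerivAt_id x).prodMk (hasDerivAt_const x t))).deriv

lemma pd2_eq_fderiv (hf : Differentiable ℝ fun q : ℝ × ℝ => f q.1 q.2) (x t : ℝ) :
    pd2 f x t = fderiv ℝ (fun q : ℝ × ℝ => f q.1 q.2) (x, t) (0, 1) :=
  ((hf (x, t)).hasFDerivAt.comp_hasDerivAt t
    ((hasDerivAt_const t x).prodMk (hasDerivAt_id t))).deriv

lemma contDiff_pd1 (hf : ContDiff ℝ n fun q : ℝ × ℝ => f q.1 q.2) (hmn : m + 1 ≤ n) :
    ContDiff ℝ m fun q : ℝ × ℝ => pd1 f q.1 q.2 :=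
  ContDiff.fderiv_apply (f := fun (q : ℝ × ℝ) ξ => f ξ q.2) (k := fun _ => 1)
    (hf.comp (by fun_prop : ContDiff ℝ n fun r : (ℝ × ℝ) × ℝ => (r.2, r.1.2)))
    contDiff_fst contDiff_const hmn

lemma contDiff_pd2 (hf : ContDiff ℝ n fun q : ℝ × ℝ => f q.1 q.2) (hmn : m + 1 ≤ n) :
    ContDiff ℝ m fun q : ℝ × ℝ => pd2 f q.1 q.2 :=
  ContDiff.fderiv_apply (f := fun (q : ℝ × ℝ) s => f q.1 s) (k := fun _ => 1)
    (hf.comp (by fun_prop : ContDiff ℝ n fun r : (ℝ × ℝ) × ℝ => (r.1.1, r.2)))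
    contDiff_snd contDiff_const hmn

lemma pd2_pd1_eq_pd1_pd2 (hf : ContDiff ℝ 2 fun q : ℝ × ℝ => f q.1 q.2) (x t : ℝ) :
    pd2 (pd1 f) x t = pd1 (pd2 f) x t := by
  have hf' : Differentiable ℝ fun q : ℝ × ℝ => f q.1 q.2 := hf.differentiable two_ne_zero
  have hDf : Differentiable ℝ (fderiv ℝ fun q : ℝ × ℝ => f q.1 q.2) :=
    (hf.fderiv_right one_add_one_eq_two.le).differentiable one_ne_zero
  have second_fderiv (u w : ℝ × ℝ) :
      fderiv ℝ (fun q => fderiv ℝ (fun q : ℝ × ℝ => f q.1 q.2) q u) (x, t) w =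
        fderiv ℝ (fderiv ℝ fun q : ℝ × ℝ => f q.1 q.2) (x, t) w u := by
    simp [fderiv_clm_apply (hDf (x, t)) (differentiableAt_const u)]
  rw [pd2_eq_fderiv ((contDiff_pd1 hf one_add_one_eq_two.le).differentiable one_ne_zero),
    pd1_eq_fderiv ((contDiff_pd2 hf one_add_one_eq_two.le).differentiable one_ne_zero)]
  simp only [pd1_eq_fderiv hf', pd2_eq_fderiv hf', Prod.mk.eta, second_fderiv]
  exact hf.contDiffAt.isSymmSndFDerivAt (by simp) _ _

end PartialDerivatives

section ParametricIntegrals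

lemma hasDerivAt_integral_of_continuous {E : Type*} [NormedAddCommGroup E] [NormedSpace ℝ E]
    {F F' : ℝ → ℝ → E} {a b t : ℝ} (hF : ∀ s, Continuous fun x => F x s)
    (hF' : Continuous fun q : ℝ × ℝ => F' q.1 q.2)
    (hderiv : ∀ᶠ s in 𝓝 t, ∀ x ∈ uIcc a b, HasDerivAt (F x) (F' x s) s) :
    HasDerivAt (fun s => ∫ x in a..b, F x s) (∫ x in a..b, F' x t) t := by
  obtain ⟨C, hC⟩ := (isCompact_uIcc.prod (isCompact_closedBall t 1)).exists_bound_of_continuousOn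
    (s := uIcc a b ×ˢ Metric.closedBall t 1) hF'.continuousOn
  refine (hasDerivAt_integral_of_dominated_loc_of_deriv_le (F := fun s x => F x s)
    (F' := fun s x => F' x s) (bound := fun _ => C)
    (inter_mem (Metric.closedBall_mem_nhds t one_pos) hderiv)
    (.of_forall fun s => (hF s).aestronglyMeasurable) ((hF t).intervalIntegrable a b)
    (hF'.comp (.prodMk_left t)).aestronglyMeasurable
    (.of_forall fun x hx s hs => hC (x, s) ⟨uIoc_subset_uIcc hx, hs.1⟩)
    intervalIntegrable_const (.of_forall fun x hx s hs => hs.2 x (uIoc_subset_uIcc hx))).2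

lemma hasDerivAt_integral_of_contDiff {f : ℝ → ℝ → ℝ}
    (hf : ContDiff ℝ 1 fun q : ℝ × ℝ => f q.1 q.2) (a b t : ℝ) :
    HasDerivAt (fun s => ∫ x in a..b, f x s) (∫ x in a..b, pd2 f x t) t :=
  hasDerivAt_integral_of_continuous (fun s => hf.continuous.comp (.prodMk_left s))
    (contDiff_pd2 hf (zero_add 1).le).continuous
    (.of_forall fun s x _ => hasDerivAt_pd2 (hf.differentiable one_ne_zero) x s)

end ParametricIntegrals

section MechanicalEnergy

/-- The kinetic and potential energy of the beam at time `t`: the energy `E` of the paper without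
its delay term. -/
noncomputable def mechanicalEnergy (ρ μ α₁ β γ L : ℝ) (v p : ℝ → ℝ → ℝ) (t : ℝ) : ℝ :=
  (1 / 2) * (∫ x in (0 : ℝ)..L,
    (ρ * (pd2 v x t) ^ 2 + μ * (pd2 p x t) ^ 2 + α₁ * (pd1 v x t) ^ 2
      + β * (γ * pd1 v x t - pd1 p x t) ^ 2))

variable {L t : ℝ} {v p : ℝ → ℝ → ℝ}

lemma hasDerivAt_mechanicalEnergy (ρ μ α₁ β γ L : ℝ)
    (hv : ContDiff ℝ 2 fun q : ℝ × ℝ => v q.1 q.2) (hp : ContDiff ℝ 2 fun q : ℝ × ℝ => p q.1 q.2)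
    (t : ℝ) :
    HasDerivAt (mechanicalEnergy ρ μ α₁ β γ L v p)
      (∫ x in (0 : ℝ)..L,
        (ρ * pd2 v x t * pd2 (pd2 v) x t + μ * pd2 p x t * pd2 (pd2 p) x t
          + α₁ * pd1 v x t * pd2 (pd1 v) x t
          + β * (γ * pd1 v x t - pd1 p x t) * (γ * pd2 (pd1 v) x t - pd2 (pd1 p) x t))) t := by
  have hv₁ := contDiff_pd1 hv one_add_one_eq_two.le
  have hv₂ := contDiff_pd2 hv one_add_one_eq_two.le
  have hp₁ := contDiff_pd1 hp one_add_one_eq_two.le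
  have hp₂ := contDiff_pd2 hp one_add_one_eq_two.le
  refine ((hasDerivAt_integral_of_contDiff (f := fun x s => ρ * (pd2 v x s) ^ 2
    + μ * (pd2 p x s) ^ 2 + α₁ * (pd1 v x s) ^ 2 + β * (γ * pd1 v x s - pd1 p x s) ^ 2)
    (by fun_prop) 0 L t).const_mul (1 / 2)).congr_deriv ?_
  rw [← intervalIntegral.integral_const_mul]
  congr 1 with x
  have hv₁t := hasDerivAt_pd2 (hv₁.differentiable one_ne_zero) x t
  have hv₂t := hasDerivAt_pd2 (hv₂.differentiable one_ne_zero) x t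
  have hp₁t := hasDerivAt_pd2 (hp₁.differentiable one_ne_zero) x t
  have hp₂t := hasDerivAt_pd2 (hp₂.differentiable one_ne_zero) x t
  have hdensity := ((((hv₂t.fun_pow 2).const_mul ρ).fun_add ((hp₂t.fun_pow 2).const_mul μ)).fun_add
    ((hv₁t.fun_pow 2).const_mul α₁)).fun_add
    ((((hv₁t.const_mul γ).fun_sub hp₁t).fun_pow 2).const_mul β)
  rw [pd2, hdensity.deriv]
  ring

lemma integral_pd2_pd1_mul_add_pd2_mul_eq_zero {f : ℝ → ℝ → ℝ} {S S' : ℝ → ℝ}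
    (hf : ContDiff ℝ 2 fun q : ℝ × ℝ => f q.1 q.2) (hS : ∀ x, HasDerivAt S (S' x) x)
    (hS' : Continuous S') (hf₀ : pd2 f 0 t = 0) (hSL : S L = 0) :
    ∫ x in (0 : ℝ)..L, (pd2 (pd1 f) x t * S x + pd2 f x t * S' x) = 0 := by
  have hf₂ := contDiff_pd2 hf one_add_one_eq_two.le
  have hf₂₁ := (contDiff_pd1 hf₂ (zero_add 1).le).continuous
  simp only [pd2_pd1_eq_pd1_pd2 hf]
  rw [integral_deriv_mul_eq_sub
    (fun x _ => hasDerivAt_pd1 (hf₂.differentiable one_ne_zero) x t) (fun x _ => hS x)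
    ((hf₂₁.comp (.prodMk_left t)).intervalIntegrable 0 L) (hS'.intervalIntegrable 0 L), hf₀, hSL]
  simp

lemma hasDerivAt_mechanicalEnergy_of_boundary (ρ μ α₁ β γ : ℝ)
    (hv : ContDiff ℝ 2 fun q : ℝ × ℝ => v q.1 q.2) (hp : ContDiff ℝ 2 fun q : ℝ × ℝ => p q.1 q.2)
    (hv₀ : pd2 v 0 t = 0) (hp₀ : pd2 p 0 t = 0) (hvL : pd1 v L t = 0) (hpL : pd1 p L t = 0) :
    HasDerivAt (mechanicalEnergy ρ μ α₁ β γ L v p)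
      (∫ x in (0 : ℝ)..L,
        (pd2 v x t * (ρ * pd2 (pd2 v) x t - (α₁ + γ ^ 2 * β) * pd1 (pd1 v) x t
            + γ * β * pd1 (pd1 p) x t)
          + pd2 p x t * (μ * pd2 (pd2 p) x t - β * pd1 (pd1 p) x t
            + γ * β * pd1 (pd1 v) x t))) t := by
  have hv₁ := contDiff_pd1 hv one_add_one_eq_two.le
  have hv₂ := contDiff_pd2 hv one_add_one_eq_two.le
  have hp₁ := contDiff_pd1 hp one_add_one_eq_two.le
  have hp₂ := contDiff_pd2 hp one_add_one_eq_two.le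
  have hv₁₁ := contDiff_pd1 hv₁ (zero_add 1).le
  have hv₁₂ := contDiff_pd2 hv₁ (zero_add 1).le
  have hv₂₂ := contDiff_pd2 hv₂ (zero_add 1).le
  have hp₁₁ := contDiff_pd1 hp₁ (zero_add 1).le
  have hp₁₂ := contDiff_pd2 hp₁ (zero_add 1).le
  have hp₂₂ := contDiff_pd2 hp₂ (zero_add 1).le
  have hv₁x (x : ℝ) := hasDerivAt_pd1 (hv₁.differentiable one_ne_zero) x t
  have hp₁x (x : ℝ) := hasDerivAt_pd1 (hp₁.differentiable one_ne_zero) x t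
  have flux_v := integral_pd2_pd1_mul_add_pd2_mul_eq_zero hv
    (fun x => ((hv₁x x).const_mul (α₁ + γ ^ 2 * β)).fun_sub ((hp₁x x).const_mul (γ * β)))
    (by fun_prop) hv₀ (L := L) (by simp [hvL, hpL])
  have flux_p := integral_pd2_pd1_mul_add_pd2_mul_eq_zero hp
    (fun x => ((hp₁x x).const_mul β).fun_sub ((hv₁x x).const_mul (γ * β)))
    (by fun_prop) hp₀ (L := L) (by simp [hvL, hpL])
  refine (hasDerivAt_mechanicalEnergy ρ μ α₁ β γ L hv hp t).congr_deriv ?_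
  rw [← sub_eq_zero, ← intervalIntegral.integral_sub]
  · refine Eq.trans ?_ ((congrArg₂ (· + ·) flux_v flux_p).trans (add_zero 0))
    rw [← intervalIntegral.integral_add]
    · congr 1 with x
      ring
    all_goals exact Continuous.intervalIntegrable (by fun_prop) _ _
  all_goals exact Continuous.intervalIntegrable (by fun_prop) _ _

end MechanicalEnergy

section DelayEnergy

lemma hasDerivAt_mul_integral_sq_of_transport {w : ℝ → ℝ → ℝ} {τ : ℝ → ℝ} {t : ℝ}
    (hw : ContDiff ℝ 1 fun q : ℝ × ℝ => w q.1 q.2) (hτ : DifferentiableAt ℝ τ t)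
    (transport : ∀ y ∈ Icc (0 : ℝ) 1,
      τ t * pd2 w y t + (1 - deriv τ t * y) * pd1 w y t = 0) :
    HasDerivAt (fun s => τ s * ∫ y in (0 : ℝ)..1, (w y s) ^ 2)
      ((w 0 t) ^ 2 - (1 - deriv τ t) * (w 1 t) ^ 2) t := by
  have hw' := hw.differentiable one_ne_zero
  have hw₁ := contDiff_pd1 hw (zero_add 1).le
  have hw₂ := contDiff_pd2 hw (zero_add 1).le
  have pd2_sq (y : ℝ) : pd2 (fun y s => (w y s) ^ 2) y t = 2 * w y t * pd2 w y t := by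
    rw [pd2, ((hasDerivAt_pd2 hw' y t).fun_pow 2).deriv]
    ring
  have flux (y : ℝ) : HasDerivAt (fun y => -((1 - deriv τ t * y) * (w y t) ^ 2))
      (deriv τ t * (w y t) ^ 2 - (1 - deriv τ t * y) * (2 * w y t * pd1 w y t)) y := by
    refine ((((hasDerivAt_id y).const_mul (deriv τ t)).const_sub 1).mul
      ((hasDerivAt_pd1 hw' y t).pow 2)).neg.congr_deriv ?_
    simp only [id, Pi.pow_apply]
    ring
  refine (hτ.hasDerivAt.mul (hasDerivAt_integral_of_contDiff (hw.pow 2) 0 1 t)).congr_deriv ?_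
  calc deriv τ t * (∫ y in (0 : ℝ)..1, (w y t) ^ 2)
        + τ t * ∫ y in (0 : ℝ)..1, pd2 (fun y s => (w y s) ^ 2) y t
      = ∫ y in (0 : ℝ)..1, (deriv τ t * (w y t) ^ 2 + τ t * (2 * w y t * pd2 w y t)) := by
        simp only [pd2_sq]
        rw [intervalIntegral.integral_add, intervalIntegral.integral_const_mul,
          intervalIntegral.integral_const_mul]
        all_goals exact Continuous.intervalIntegrable (by fun_prop) _ _
    _ = ∫ y in (0 : ℝ)..1,
          (deriv τ t * (w y t) ^ 2 - (1 - deriv τ t * y) * (2 * w y t * pd1 w y t)) := by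
        refine integral_congr fun y hy => ?_
        rw [uIcc_of_le zero_le_one] at hy
        linear_combination 2 * w y t * transport y hy
    _ = (w 0 t) ^ 2 - (1 - deriv τ t) * (w 1 t) ^ 2 := by
        rw [integral_eq_sub_of_hasDerivAt (fun y _ => flux y)
          (Continuous.intervalIntegrable (by fun_prop) _ _)]
        ring

/-- The term of the energy that stores the delayed velocity `z`, without its weight `ξ / 2`. -/
noncomputable def delayEnergy (L : ℝ) (τ : ℝ → ℝ) (z : ℝ → ℝ → ℝ → ℝ) (t : ℝ) : ℝ :=
  τ t * ∫ x in (0 : ℝ)..L, ∫ y in (0 : ℝ)..1, (z x y t) ^ 2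

variable {L t : ℝ} {τ : ℝ → ℝ} {z : ℝ → ℝ → ℝ → ℝ}

lemma continuous_integral_sq (hz : Continuous fun q : ℝ × ℝ × ℝ => z q.1 q.2.1 q.2.2) :
    Continuous fun q : ℝ × ℝ => ∫ y in (0 : ℝ)..1, (z q.1 y q.2) ^ 2 :=
  continuous_parametric_intervalIntegral_of_continuous'
    ((hz.comp (by fun_prop : Continuous fun r : (ℝ × ℝ) × ℝ => (r.1.1, r.2, r.1.2))).pow 2) 0 1

lemma continuous_delayEnergy (L : ℝ) (hτ : Continuous τ)
    (hz : Continuous fun q : ℝ × ℝ × ℝ => z q.1 q.2.1 q.2.2) :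
    Continuous (delayEnergy L τ z) :=
  hτ.mul (continuous_parametric_intervalIntegral_of_continuous'
    (f := fun s x => ∫ y in (0 : ℝ)..1, (z x y s) ^ 2)
    ((continuous_integral_sq hz).comp continuous_swap) 0 L)

lemma delayEnergy_nonneg (hL : 0 ≤ L) (hτ : 0 ≤ τ t) : 0 ≤ delayEnergy L τ z t :=
  mul_nonneg hτ (integral_nonneg hL fun _ _ => integral_nonneg zero_le_one fun _ _ => sq_nonneg _)

lemma hasDerivAt_delayEnergy (hτ : ContDiff ℝ 1 τ)
    (hz : ContDiff ℝ 1 fun q : ℝ × ℝ × ℝ => z q.1 q.2.1 q.2.2)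
    (transport : ∀ᶠ s in 𝓝 t, ∀ x ∈ uIcc 0 L, ∀ y ∈ Icc (0 : ℝ) 1,
      τ s * pdt z x y s + (1 - deriv τ s * y) * pdy z x y s = 0) :
    HasDerivAt (delayEnergy L τ z)
      ((∫ x in (0 : ℝ)..L, (z x 0 t) ^ 2)
        - (1 - deriv τ t) * ∫ x in (0 : ℝ)..L, (z x 1 t) ^ 2) t := by
  have hzc := hz.continuous
  have hz_slice (y : ℝ) : Continuous fun q : ℝ × ℝ => z q.1 y q.2 :=
    hzc.comp (by fun_prop : Continuous fun q : ℝ × ℝ => (q.1, y, q.2))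
  have hderiv := hasDerivAt_integral_of_continuous (a := 0) (b := L) (t := t)
    (F := fun x s => τ s * ∫ y in (0 : ℝ)..1, (z x y s) ^ 2)
    (F' := fun x s => (z x 0 s) ^ 2 - (1 - deriv τ s) * (z x 1 s) ^ 2)
    (fun s => continuous_const.mul ((continuous_integral_sq hzc).comp (.prodMk_left s)))
    (by fun_prop) (transport.mono fun s hs x hx => hasDerivAt_mul_integral_sq_of_transport
      (hz.comp (by fun_prop : ContDiff ℝ 1 fun q : ℝ × ℝ => (x, q.1, q.2)))
      (hτ.differentiable one_ne_zero s) (hs x hx))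
  simp only [intervalIntegral.integral_const_mul] at hderiv
  rwa [intervalIntegral.integral_sub, intervalIntegral.integral_const_mul] at hderiv
  all_goals exact Continuous.intervalIntegrable (by fun_prop) _ _

end DelayEnergy

section YoungInequality

lemma neg_mul_mul_le_of_abs_le {c K σ : ℝ} (hσ : 0 < σ) (hc : |c| ≤ K) (a b : ℝ) :
    -(c * (a * b)) ≤ K / (2 * σ) * a ^ 2 + K * σ / 2 * b ^ 2 := by
  have young : |a| * |b| ≤ σ⁻¹ / 2 * a ^ 2 + σ / 2 * b ^ 2 := by
    have := two_mul_le_add_mul_sq (a := |b|) (b := |a|) hσ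
    rw [sq_abs, sq_abs] at this
    linarith
  calc -(c * (a * b)) ≤ |c * (a * b)| := neg_le_abs _
    _ = |c| * (|a| * |b|) := by rw [abs_mul, abs_mul]
    _ ≤ K * (σ⁻¹ / 2 * a ^ 2 + σ / 2 * b ^ 2) := by
        gcongr
        exact (abs_nonneg c).trans hc
    _ = K / (2 * σ) * a ^ 2 + K * σ / 2 * b ^ 2 := by
        field_simp

lemma neg_mul_integral_mul_le_of_abs_le {f g : ℝ → ℝ} {a b c K σ : ℝ} (hab : a ≤ b)
    (hf : Continuous f) (hg : Continuous g) (hσ : 0 < σ) (hc : |c| ≤ K) :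
    -(c * ∫ x in a..b, f x * g x) ≤
      K / (2 * σ) * (∫ x in a..b, (f x) ^ 2) + K * σ / 2 * ∫ x in a..b, (g x) ^ 2 := by
  simp only [← intervalIntegral.integral_const_mul, ← intervalIntegral.integral_neg]
  rw [← intervalIntegral.integral_add]
  · refine integral_mono_on hab ?_ ?_ fun x _ => neg_mul_mul_le_of_abs_le hσ hc (f x) (g x)
    all_goals exact Continuous.intervalIntegrable (by fun_prop) _ _
  all_goals exact Continuous.intervalIntegrable (by fun_prop) _ _

end YoungInequality

section Beam

/-- Classical solutions `(v, p, z)` of the piezoelectric beam system with magnetic effect and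
time-varying delay. The coefficient `α` of the paper is `α₁ + γ ^ 2 * β`, and the functions are
defined on all of `ℝ`, the equations being required only for `x ∈ [0, L]`, `y ∈ [0, 1]`, `t ≥ 0`. -/
structure IsBeamSolution (ρ μ α₁ β γ L : ℝ) (τ μ₁ μ₂ : ℝ → ℝ) (v p : ℝ → ℝ → ℝ)
    (z : ℝ → ℝ → ℝ → ℝ) : Prop where
  contDiff_v : ContDiff ℝ 2 fun q : ℝ × ℝ => v q.1 q.2
  contDiff_p : ContDiff ℝ 2 fun q : ℝ × ℝ => p q.1 q.2
  contDiff_z : ContDiff ℝ 1 fun q : ℝ × ℝ × ℝ => z q.1 q.2.1 q.2.2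
  equation_v : ∀ x ∈ Icc (0 : ℝ) L, ∀ t, 0 ≤ t →
    ρ * pd2 (pd2 v) x t - (α₁ + γ ^ 2 * β) * pd1 (pd1 v) x t
      + γ * β * pd1 (pd1 p) x t + μ₁ t * pd2 v x t + μ₂ t * z x 1 t = 0
  equation_p : ∀ x ∈ Icc (0 : ℝ) L, ∀ t, 0 ≤ t →
    μ * pd2 (pd2 p) x t - β * pd1 (pd1 p) x t + γ * β * pd1 (pd1 v) x t = 0
  transport : ∀ x ∈ Icc (0 : ℝ) L, ∀ y ∈ Icc (0 : ℝ) 1, ∀ t, 0 ≤ t →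
    τ t * pdt z x y t + (1 - deriv τ t * y) * pdy z x y t = 0
  compatibility : ∀ x ∈ Icc (0 : ℝ) L, ∀ t, 0 ≤ t → z x 0 t = pd2 v x t
  boundary : ∀ t, 0 ≤ t → v 0 t = 0 ∧ p 0 t = 0 ∧ pd1 v L t = 0 ∧ pd1 p L t = 0

/-- The energy `E` of the paper, for a general weight `ξ` of the delay term. -/
noncomputable def beamEnergy (ρ μ α₁ β γ L : ℝ) (ξ τ : ℝ → ℝ) (v p : ℝ → ℝ → ℝ)
    (z : ℝ → ℝ → ℝ → ℝ) (t : ℝ) : ℝ :=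
  mechanicalEnergy ρ μ α₁ β γ L v p t
    + (ξ t * τ t / 2) * ∫ x in (0 : ℝ)..L, ∫ y in (0 : ℝ)..1, (z x y t) ^ 2

/-- The upper bound for `E'(t)` in the dissipation inequality. -/
noncomputable def dissipationBound (L d δ ξbar : ℝ) (τ μ₁ : ℝ → ℝ) (v : ℝ → ℝ → ℝ)
    (z : ℝ → ℝ → ℝ → ℝ) (t : ℝ) : ℝ :=
  -μ₁ t * (1 - ξbar / 2 - δ / (2 * √(1 - d))) * (∫ x in (0 : ℝ)..L, (pd2 v x t) ^ 2)
    - μ₁ t * (ξbar * (1 - deriv τ t) / 2 - δ * √(1 - d) / 2) *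
      (∫ x in (0 : ℝ)..L, (z x 1 t) ^ 2)

variable {ρ μ α₁ β γ L d δ ξbar t : ℝ} {ξ τ μ₁ μ₂ : ℝ → ℝ} {v p : ℝ → ℝ → ℝ}
  {z : ℝ → ℝ → ℝ → ℝ}

lemma beamEnergy_eq_mechanicalEnergy_add_delayEnergy :
    beamEnergy ρ μ α₁ β γ L ξ τ v p z =
      fun s => mechanicalEnergy ρ μ α₁ β γ L v p s + ξ s / 2 * delayEnergy L τ z s := by
  funext s
  rw [beamEnergy, delayEnergy]
  ring

lemma pd2_eq_zero_of_forall_nonneg {f : ℝ → ℝ → ℝ} {x : ℝ} (hf : ∀ s, 0 ≤ s → f x s = 0)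
    (ht : 0 < t) : pd2 f x t = 0 := by
  have : f x =ᶠ[𝓝 t] fun _ => 0 := (lt_mem_nhds ht).mono fun s hs => hf s hs.le
  rw [pd2, this.deriv_eq, deriv_const]

lemma dissipationBound_nonpos (hL : 0 ≤ L) (hd : d < 1) (hδ : 0 ≤ δ) (hτ : deriv τ t ≤ d)
    (hμ₁ : 0 ≤ μ₁ t) (hξ : ξbar ∈ Icc (δ / √(1 - d)) (2 - δ / √(1 - d))) :
    dissipationBound L d δ ξbar τ μ₁ v z t ≤ 0 := by
  have hσ : 0 < √(1 - d) := Real.sqrt_pos.2 (sub_pos.2 hd)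
  have inlet : 0 ≤ 1 - ξbar / 2 - δ / (2 * √(1 - d)) := by
    rw [mul_comm, ← div_div]
    linarith [hξ.2]
  have outlet : δ * √(1 - d) ≤ ξbar * (1 - deriv τ t) :=
    calc δ * √(1 - d) ≤ ξbar * √(1 - d) * √(1 - d) := by
          gcongr
          exact (div_le_iff₀ hσ).1 hξ.1
      _ = ξbar * (1 - d) := by rw [mul_assoc, Real.mul_self_sqrt (sub_pos.2 hd).le]
      _ ≤ ξbar * (1 - deriv τ t) := by
          gcongr
          exact (div_nonneg hδ hσ.le).trans hξ.1
  have hV : 0 ≤ ∫ x in (0 : ℝ)..L, (pd2 v x t) ^ 2 := integral_nonneg hL fun _ _ => sq_nonneg _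
  have hZ : 0 ≤ ∫ x in (0 : ℝ)..L, (z x 1 t) ^ 2 := integral_nonneg hL fun _ _ => sq_nonneg _
  rw [dissipationBound]
  linarith [mul_nonneg (mul_nonneg hμ₁ inlet) hV,
    mul_nonneg (mul_nonneg hμ₁ (show 0 ≤ ξbar * (1 - deriv τ t) / 2 - δ * √(1 - d) / 2 by
      linarith)) hZ]

namespace IsBeamSolution

lemma hasDerivAt_mechanicalEnergy (hsol : IsBeamSolution ρ μ α₁ β γ L τ μ₁ μ₂ v p z)
    (hL : 0 ≤ L) (ht : 0 < t) :
    HasDerivAt (mechanicalEnergy ρ μ α₁ β γ L v p)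
      (-μ₁ t * (∫ x in (0 : ℝ)..L, (pd2 v x t) ^ 2)
        - μ₂ t * ∫ x in (0 : ℝ)..L, pd2 v x t * z x 1 t) t := by
  have hv₂ := contDiff_pd2 hsol.contDiff_v one_add_one_eq_two.le
  have hz₁ : Continuous fun x => z x 1 t :=
    hsol.contDiff_z.continuous.comp (by fun_prop : Continuous fun x : ℝ => (x, (1 : ℝ), t))
  obtain ⟨-, -, hvL, hpL⟩ := hsol.boundary t ht.le
  refine (hasDerivAt_mechanicalEnergy_of_boundary ρ μ α₁ β γ hsol.contDiff_v hsol.contDiff_p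
    (pd2_eq_zero_of_forall_nonneg (fun s hs => (hsol.boundary s hs).1) ht)
    (pd2_eq_zero_of_forall_nonneg (fun s hs => (hsol.boundary s hs).2.1) ht) hvL hpL).congr_deriv ?_
  rw [← intervalIntegral.integral_const_mul, ← intervalIntegral.integral_const_mul,
    ← intervalIntegral.integral_sub]
  · refine integral_congr fun x hx => ?_
    rw [uIcc_of_le hL] at hx
    linear_combination pd2 v x t * hsol.equation_v x hx t ht.le
      + pd2 p x t * hsol.equation_p x hx t ht.le
  all_goals exact Continuous.intervalIntegrable (by fun_prop) _ _

lemma hasDerivAt_delayEnergy (hsol : IsBeamSolution ρ μ α₁ β γ L τ μ₁ μ₂ v p z)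
    (hL : 0 ≤ L) (hτ : ContDiff ℝ 1 τ) (ht : 0 < t) :
    HasDerivAt (delayEnergy L τ z)
      ((∫ x in (0 : ℝ)..L, (pd2 v x t) ^ 2)
        - (1 - deriv τ t) * ∫ x in (0 : ℝ)..L, (z x 1 t) ^ 2) t := by
  have inlet : ∫ x in (0 : ℝ)..L, (z x 0 t) ^ 2 = ∫ x in (0 : ℝ)..L, (pd2 v x t) ^ 2 :=
    integral_congr fun x hx => by
      simp only [hsol.compatibility x (uIcc_of_le hL ▸ hx) t ht.le]
  rw [← inlet]
  refine _root_.hasDerivAt_delayEnergy hτ hsol.contDiff_z ((lt_mem_nhds ht).mono ?_)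
  exact fun s hs x hx y hy => hsol.transport x (uIcc_of_le hL ▸ hx) y hy s hs.le

lemma hasDerivAt_beamEnergy (hsol : IsBeamSolution ρ μ α₁ β γ L τ μ₁ μ₂ v p z)
    (hL : 0 ≤ L) (hτ : ContDiff ℝ 1 τ) (hξ : DifferentiableAt ℝ ξ t) (ht : 0 < t) :
    HasDerivAt (beamEnergy ρ μ α₁ β γ L ξ τ v p z)
      (-μ₁ t * (∫ x in (0 : ℝ)..L, (pd2 v x t) ^ 2)
        - μ₂ t * (∫ x in (0 : ℝ)..L, pd2 v x t * z x 1 t)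
        + (deriv ξ t / 2 * delayEnergy L τ z t
          + ξ t / 2 * ((∫ x in (0 : ℝ)..L, (pd2 v x t) ^ 2)
            - (1 - deriv τ t) * ∫ x in (0 : ℝ)..L, (z x 1 t) ^ 2))) t := by
  rw [beamEnergy_eq_mechanicalEnergy_add_delayEnergy]
  exact (hsol.hasDerivAt_mechanicalEnergy hL ht).add
    ((hξ.hasDerivAt.div_const 2).mul (hsol.hasDerivAt_delayEnergy hL hτ ht))

lemma continuous_beamEnergy (hsol : IsBeamSolution ρ μ α₁ β γ L τ μ₁ μ₂ v p z)
    (hτ : Continuous τ) (hξ : Continuous ξ) :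
    Continuous (beamEnergy ρ μ α₁ β γ L ξ τ v p z) := by
  have hmech : Continuous (mechanicalEnergy ρ μ α₁ β γ L v p) :=
    continuous_iff_continuousAt.2 fun t => (_root_.hasDerivAt_mechanicalEnergy ρ μ α₁ β γ L
      hsol.contDiff_v hsol.contDiff_p t).continuousAt
  rw [beamEnergy_eq_mechanicalEnergy_add_delayEnergy]
  exact hmech.add ((hξ.div_const 2).mul (continuous_delayEnergy L hτ hsol.contDiff_z.continuous))

lemma exists_hasDerivAt_beamEnergy_le (hsol : IsBeamSolution ρ μ α₁ β γ L τ μ₁ μ₂ v p z)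
    (hL : 0 ≤ L) (hd : d < 1) (hτ : ContDiff ℝ 1 τ) (hτt : 0 ≤ τ t)
    (hμ₁ : DifferentiableAt ℝ μ₁ t) (hμ₁' : deriv μ₁ t ≤ 0) (hμ₂ : |μ₂ t| ≤ δ * μ₁ t)
    (hξ : 0 ≤ ξbar) (ht : 0 < t) :
    ∃ D, HasDerivAt (beamEnergy ρ μ α₁ β γ L (fun s => ξbar * μ₁ s) τ v p z) D t ∧
      D ≤ dissipationBound L d δ ξbar τ μ₁ v z t := by
  have hv₂ := contDiff_pd2 hsol.contDiff_v one_add_one_eq_two.le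
  have hz₁ : Continuous fun x => z x 1 t :=
    hsol.contDiff_z.continuous.comp (by fun_prop : Continuous fun x : ℝ => (x, (1 : ℝ), t))
  refine ⟨_, hsol.hasDerivAt_beamEnergy hL hτ (hμ₁.const_mul ξbar) ht, ?_⟩
  have cross := neg_mul_integral_mul_le_of_abs_le (f := fun x => pd2 v x t) hL (by fun_prop) hz₁
    (Real.sqrt_pos.2 (sub_pos.2 hd)) hμ₂
  have weight : ξbar * deriv μ₁ t / 2 * delayEnergy L τ z t ≤ 0 :=
    mul_nonpos_of_nonpos_of_nonneg (by linarith [mul_nonpos_of_nonneg_of_nonpos hξ hμ₁'])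
      (delayEnergy_nonneg hL hτt)
  rw [deriv_const_mul _ hμ₁, dissipationBound]
  linear_combination cross + weight

end IsBeamSolution

theorem energy_dissipation_general (hL : 0 ≤ L) (hd : d < 1) (hδ : 0 ≤ δ)
    (hτ : ContDiff ℝ 1 τ) (hτ_nonneg : ∀ t, 0 ≤ t → 0 ≤ τ t)
    (hτ' : ∀ t, 0 ≤ t → deriv τ t ≤ d) (hμ₁ : Differentiable ℝ μ₁)
    (hμ₁_nonneg : ∀ t, 0 ≤ t → 0 ≤ μ₁ t) (hμ₁_anti : AntitoneOn μ₁ (Ici 0))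
    (hμ₂ : ∀ t, 0 ≤ t → |μ₂ t| ≤ δ * μ₁ t)
    (hsol : IsBeamSolution ρ μ α₁ β γ L τ μ₁ μ₂ v p z)
    (hξ : ξbar ∈ Icc (δ / √(1 - d)) (2 - δ / √(1 - d))) :
    (∀ t, 0 < t → ∃ D,
      HasDerivAt (beamEnergy ρ μ α₁ β γ L (fun s => ξbar * μ₁ s) τ v p z) D t ∧
        D ≤ dissipationBound L d δ ξbar τ μ₁ v z t ∧
        dissipationBound L d δ ξbar τ μ₁ v z t ≤ 0) ∧
    AntitoneOn (beamEnergy ρ μ α₁ β γ L (fun s => ξbar * μ₁ s) τ v p z) (Ici 0) := by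
  have hμ₁' (t : ℝ) (ht : 0 < t) : deriv μ₁ t ≤ 0 := by
    rw [← derivWithin_of_mem_nhds (Ici_mem_nhds ht)]
    exact hμ₁_anti.derivWithin_nonpos
  have hξ_nonneg : 0 ≤ ξbar := (div_nonneg hδ (Real.sqrt_nonneg _)).trans hξ.1
  have dissipation (t : ℝ) (ht : 0 < t) := hsol.exists_hasDerivAt_beamEnergy_le hL hd hτ
    (hτ_nonneg t ht.le) (hμ₁ t) (hμ₁' t ht) (hμ₂ t ht.le) hξ_nonneg ht
  have bound_nonpos (t : ℝ) (ht : 0 < t) : dissipationBound L d δ ξbar τ μ₁ v z t ≤ 0 :=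
    dissipationBound_nonpos hL hd hδ (hτ' t ht.le) (hμ₁_nonneg t ht.le) hξ
  refine ⟨fun t ht => ?_, antitoneOn_of_deriv_nonpos (convex_Ici 0)
    (hsol.continuous_beamEnergy hτ.continuous (hμ₁.continuous.const_mul ξbar)).continuousOn
    ?_ ?_⟩
  · obtain ⟨D, hD, hle⟩ := dissipation t ht
    exact ⟨D, hD, hle, bound_nonpos t ht⟩
  all_goals
    rw [interior_Ici]
    intro t ht
    obtain ⟨D, hD, hle⟩ := dissipation t ht
  · exact hD.differentiableAt.differentiableWithinAt
  · exact hD.deriv.trans_le (hle.trans (bound_nonpos t ht))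

end Beam

/-- Lemma 4.1 (energy dissipation): the energy of the piezoelectric beam system with
magnetic effect and time-varying delay is differentiable with
`E'(t) ≤ −μ₁(t)(1 − ξ̄/2 − δ/(2√(1−d)))∫v_t² − μ₁(t)(ξ̄(1−τ')/2 − δ√(1−d)/2)∫z(·,1)² ≤ 0`;
in particular `E` is nonincreasing. -/
theorem energy_dissipation
    (ρ μ α₁ β γ L τ₀ τ₁ d δ : ℝ)
    (hρ : 0 < ρ) (hμ : 0 < μ) (hα₁ : 0 < α₁) (hβ : 0 < β) (hγ : 0 < γ) (hL : 0 < L)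
    (hτ₀ : 0 < τ₀) (hd : d < 1) (hδ0 : 0 < δ) (hδ : δ < Real.sqrt (1 - d))
    (τ μ₁ μ₂ : ℝ → ℝ)
    -- (A1)
    (hτC1 : ContDiff ℝ 1 τ)
    (hτbd : ∀ t, 0 ≤ t → τ₀ ≤ τ t ∧ τ t ≤ τ₁)
    (hτ' : ∀ t, 0 ≤ t → deriv τ t ≤ d)
    -- (A2)
    (hμ₁C1 : ContDiff ℝ 1 μ₁)
    (hμ₁pos : ∀ t, 0 ≤ t → 0 < μ₁ t)
    (hμ₁dec : ∀ s t, 0 ≤ s → s ≤ t → μ₁ t ≤ μ₁ s)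
    -- (A3)
    (hμ₂C1 : ContDiff ℝ 1 μ₂)
    (hμ₂bd : ∀ t, 0 ≤ t → |μ₂ t| ≤ δ * μ₁ t)
    -- classical solution
    (v p : ℝ → ℝ → ℝ) (z : ℝ → ℝ → ℝ → ℝ)
    (hv : ContDiff ℝ 2 fun q : ℝ × ℝ => v q.1 q.2)
    (hp : ContDiff ℝ 2 fun q : ℝ × ℝ => p q.1 q.2)
    (hzC1 : ContDiff ℝ 1 fun q : ℝ × ℝ × ℝ => z q.1 q.2.1 q.2.2)
    (heq1 : ∀ x ∈ Set.Icc (0:ℝ) L, ∀ t, 0 ≤ t →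
      ρ * pd2 (pd2 v) x t - (α₁ + γ ^ 2 * β) * pd1 (pd1 v) x t
        + γ * β * pd1 (pd1 p) x t + μ₁ t * pd2 v x t + μ₂ t * z x 1 t = 0)
    (heq2 : ∀ x ∈ Set.Icc (0:ℝ) L, ∀ t, 0 ≤ t →
      μ * pd2 (pd2 p) x t - β * pd1 (pd1 p) x t + γ * β * pd1 (pd1 v) x t = 0)
    (heq3 : ∀ x ∈ Set.Icc (0:ℝ) L, ∀ y ∈ Set.Icc (0:ℝ) 1, ∀ t, 0 ≤ t →
      τ t * pdt z x y t + (1 - deriv τ t * y) * pdy z x y t = 0)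
    (hcomp : ∀ x ∈ Set.Icc (0:ℝ) L, ∀ t, 0 ≤ t → z x 0 t = pd2 v x t)
    (hbc : ∀ t, 0 ≤ t → v 0 t = 0 ∧ p 0 t = 0 ∧ pd1 v L t = 0 ∧ pd1 p L t = 0)
    (ξbar : ℝ)
    (hξ1 : δ / Real.sqrt (1 - d) < ξbar) (hξ2 : ξbar < 2 - δ / Real.sqrt (1 - d)) :
    let E : ℝ → ℝ := fun s =>
      (1 / 2) * (∫ x in (0:ℝ)..L,
          (ρ * (pd2 v x s) ^ 2 + μ * (pd2 p x s) ^ 2 + α₁ * (pd1 v x s) ^ 2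
            + β * (γ * pd1 v x s - pd1 p x s) ^ 2))
        + (ξbar * μ₁ s * τ s / 2) * ∫ x in (0:ℝ)..L, ∫ y in (0:ℝ)..1, (z x y s) ^ 2
    (∀ t, 0 < t →
      ∃ D : ℝ, HasDerivAt E D t ∧
        D ≤ -μ₁ t * (1 - ξbar / 2 - δ / (2 * Real.sqrt (1 - d))) *
                (∫ x in (0:ℝ)..L, (pd2 v x t) ^ 2)
              - μ₁ t * (ξbar * (1 - deriv τ t) / 2 - δ * Real.sqrt (1 - d) / 2) *
                (∫ x in (0:ℝ)..L, (z x 1 t) ^ 2) ∧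
        -μ₁ t * (1 - ξbar / 2 - δ / (2 * Real.sqrt (1 - d))) *
            (∫ x in (0:ℝ)..L, (pd2 v x t) ^ 2)
          - μ₁ t * (ξbar * (1 - deriv τ t) / 2 - δ * Real.sqrt (1 - d) / 2) *
            (∫ x in (0:ℝ)..L, (z x 1 t) ^ 2) ≤ 0) ∧
    ∀ s t, 0 ≤ s → s ≤ t → E t ≤ E s := by
  obtain ⟨hE', hE⟩ := energy_dissipation_general hL.le hd hδ0.le hτC1
    (fun t ht => hτ₀.le.trans (hτbd t ht).1) hτ' (hμ₁C1.differentiable one_ne_zero)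
    (fun t ht => (hμ₁pos t ht).le) (fun s hs t _ hst => hμ₁dec s t hs hst) hμ₂bd
    ⟨hv, hp, hzC1, heq1, heq2, heq3, hcomp, hbc⟩ ⟨hξ1.le, hξ2.le⟩
  exact ⟨hE', fun s t hs hst => hE hs (hs.trans hst) hst⟩
end

section
/- (Lemma 4.5.) Let (v,p,z) be a classical solution of the piezoelectric beam system with magnetic effect and time-varying delay, under assumptions (A1)–(A3) and with ξ̄ > 0 fixed, and define J(t) := ξ̄·τ(t)·∫₀^L∫₀^1 e^{−2τ(t)y}·z(x,y,t)² dy dx. Then for every t > 0, J'(t) ≤ −2J(t) + ξ̄∫₀^L v_t(x,t)² dx. -/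
/-!
Put `w = e^{-κτ(t)y} z²`. The transport equation for `z` makes `w` solve the damped conservation law
`∂ₜ(τ w) + ∂_y((1 - τ'y) w) = -κ τ w`. Integrating over `[0, L] × [0, 1]` yields the exact identity
`J' = -κ J + ξ ∫ z(x,0,t)² dx - ξ (1 - τ'(t)) e^{-κτ(t)} ∫ z(x,1,t)² dx`; the outflow term is
nonpositive as soon as `τ'(t) ≤ 1`.
-/

open MeasureTheory intervalIntegral

section ParametricIntegral

variable {𝕜 E : Type*} [RCLike 𝕜] [NormedAddCommGroup E] [NormedSpace ℝ E] [NormedSpace 𝕜 E]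

theorem hasDerivAt_intervalIntegral_of_continuous {m : Measure ℝ} [IsLocallyFiniteMeasure m]
    {a b : ℝ} {F F' : 𝕜 → ℝ → E}
    (hF : Continuous fun q : 𝕜 × ℝ => F q.1 q.2) (hF' : Continuous fun q : 𝕜 × ℝ => F' q.1 q.2)
    (hderiv : ∀ s x, HasDerivAt (fun r => F r x) (F' s x) s) (t : 𝕜) :
    HasDerivAt (fun s => ∫ x in a..b, F s x ∂m) (∫ x in a..b, F' t x ∂m) t := by
  have section_continuous {G : 𝕜 → ℝ → E} (hG : Continuous fun q : 𝕜 × ℝ => G q.1 q.2) (s : 𝕜) :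
      Continuous (G s) := hG.comp (Continuous.prodMk_right s)
  obtain ⟨C, hC⟩ := ((isCompact_closedBall t 1).prod
    (isCompact_uIcc (a := a) (b := b))).exists_bound_of_continuousOn hF'.continuousOn
  refine (hasDerivAt_integral_of_dominated_loc_of_deriv_le (F := F) (F' := F')
    (bound := fun _ => C) (Metric.ball_mem_nhds t one_pos)
    (.of_forall fun s => (section_continuous hF s).aestronglyMeasurable)
    ((section_continuous hF t).intervalIntegrable a b)
    (section_continuous hF' t).aestronglyMeasurable
    (.of_forall fun x hx s hs => ?_) intervalIntegrable_const
    (.of_forall fun x _ s _ => hderiv s x)).2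
  exact hC (s, x) ⟨Metric.ball_subset_closedBall hs, Set.uIoc_subset_uIcc hx⟩

end ParametricIntegral

section PartialDerivatives

variable {w : ℝ → ℝ → ℝ → ℝ}

theorem hasDerivAt_pdy {x y t : ℝ}
    (hw : DifferentiableAt ℝ (fun q : ℝ × ℝ × ℝ => w q.1 q.2.1 q.2.2) (x, y, t)) :
    HasDerivAt (fun r => w x r t) (pdy w x y t) y :=
  (hw.comp (f := fun r : ℝ => (x, r, t)) y (by fun_prop)).hasDerivAt

theorem hasDerivAt_pdt {x y t : ℝ}
    (hw : DifferentiableAt ℝ (fun q : ℝ × ℝ × ℝ => w q.1 q.2.1 q.2.2) (x, y, t)) :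
    HasDerivAt (w x y) (pdt w x y t) t :=
  (hw.comp (f := fun s : ℝ => (x, y, s)) t (by fun_prop)).hasDerivAt

theorem pdt_eq_fderiv {x y t : ℝ}
    (hw : DifferentiableAt ℝ (fun q : ℝ × ℝ × ℝ => w q.1 q.2.1 q.2.2) (x, y, t)) :
    pdt w x y t = fderiv ℝ (fun q : ℝ × ℝ × ℝ => w q.1 q.2.1 q.2.2) (x, y, t) (0, 0, 1) := by
  have hline : HasDerivAt (fun s : ℝ => (x, y, s)) (0, 0, 1) t :=
    (hasDerivAt_const t x).prodMk ((hasDerivAt_const t y).prodMk (hasDerivAt_id t))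
  exact (hw.hasFDerivAt.comp_hasDerivAt t hline).deriv

theorem continuous_pdt (hw : ContDiff ℝ 1 fun q : ℝ × ℝ × ℝ => w q.1 q.2.1 q.2.2) :
    Continuous fun q : ℝ × ℝ × ℝ => pdt w q.1 q.2.1 q.2.2 := by
  simp only [pdt_eq_fderiv (hw.differentiable one_ne_zero _)]
  exact (hw.continuous_fderiv one_ne_zero).clm_apply continuous_const

theorem continuous_integral_second_variable {u : ℝ → ℝ → ℝ → ℝ}
    (hu : Continuous fun q : ℝ × ℝ × ℝ => u q.1 q.2.1 q.2.2) (c d : ℝ) :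
    Continuous fun q : ℝ × ℝ => ∫ y in c..d, u q.2 y q.1 :=
  continuous_parametric_intervalIntegral_of_continuous' (f := fun (q : ℝ × ℝ) y => u q.2 y q.1)
    (hu.comp (f := fun q : (ℝ × ℝ) × ℝ => (q.1.2, q.2, q.1.1)) (by fun_prop)) c d

theorem hasDerivAt_integral_integral_pdt
    (hw : ContDiff ℝ 1 fun q : ℝ × ℝ × ℝ => w q.1 q.2.1 q.2.2) (a b c d t : ℝ) :
    HasDerivAt (fun s => ∫ x in a..b, ∫ y in c..d, w x y s)
      (∫ x in a..b, ∫ y in c..d, pdt w x y t) t := by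
  have hpdt := continuous_pdt hw
  have inner (s x : ℝ) :
      HasDerivAt (fun r => ∫ y in c..d, w x y r) (∫ y in c..d, pdt w x y s) s :=
    hasDerivAt_intervalIntegral_of_continuous (F := fun r y => w x y r)
      (F' := fun r y => pdt w x y r)
      (hw.continuous.comp (f := fun q : ℝ × ℝ => (x, q.2, q.1)) (by fun_prop))
      (hpdt.comp (f := fun q : ℝ × ℝ => (x, q.2, q.1)) (by fun_prop))
      (fun r y => hasDerivAt_pdt (hw.differentiable one_ne_zero _)) s
  exact hasDerivAt_intervalIntegral_of_continuous
    (continuous_integral_second_variable hw.continuous c d)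
    (continuous_integral_second_variable hpdt c d) inner t

end PartialDerivatives

/-- The transport operator `τ ∂ₜ + (1 - τ' y) ∂_y` annihilating the rescaled delayed velocity
`z(x, y, t) = vₜ(x, t - τ(t) y)`. -/
noncomputable def delayTransport (τ : ℝ → ℝ) (z : ℝ → ℝ → ℝ → ℝ) (x y t : ℝ) : ℝ :=
  τ t * pdt z x y t + (1 - deriv τ t * y) * pdy z x y t

/-- The weighted energy density `e^{-κτ(t)y} z²` of the delay variable. -/
noncomputable def delayDensity (κ : ℝ) (τ : ℝ → ℝ) (z : ℝ → ℝ → ℝ → ℝ) (x y t : ℝ) : ℝ :=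
  Real.exp (-κ * τ t * y) * z x y t ^ 2

/-- The functional `ξ τ(t) ∫₀ᴸ ∫₀¹ w dy dx` of a density `w`; the functional `J` is the case
`w = delayDensity 2 τ z`. -/
noncomputable def delayFunctional (ξ L : ℝ) (τ : ℝ → ℝ) (w : ℝ → ℝ → ℝ → ℝ) (t : ℝ) : ℝ :=
  ξ * τ t * ∫ x in (0 : ℝ)..L, ∫ y in (0 : ℝ)..1, w x y t

section Balance

variable {t : ℝ} {τ : ℝ → ℝ} {w : ℝ → ℝ → ℝ → ℝ}

theorem integral_balance_of_delayTransport
    (hw : ContDiff ℝ 1 fun q : ℝ × ℝ × ℝ => w q.1 q.2.1 q.2.2) {k x : ℝ}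
    (htransport : ∀ y ∈ Set.Icc (0 : ℝ) 1, delayTransport τ w x y t = k * w x y t) :
    deriv τ t * (∫ y in (0 : ℝ)..1, w x y t) + τ t * (∫ y in (0 : ℝ)..1, pdt w x y t)
      = k * (∫ y in (0 : ℝ)..1, w x y t) + w x 0 t - (1 - deriv τ t) * w x 1 t := by
  have hw_int : IntervalIntegrable (fun y => w x y t) volume 0 1 :=
    (hw.continuous.comp (f := fun y : ℝ => (x, y, t)) (by fun_prop)).intervalIntegrable 0 1
  have hpdt_int : IntervalIntegrable (fun y => pdt w x y t) volume 0 1 :=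
    ((continuous_pdt hw).comp (f := fun y : ℝ => (x, y, t)) (by fun_prop)).intervalIntegrable 0 1
  have flux_deriv : ∀ y ∈ Set.uIcc (0 : ℝ) 1,
      HasDerivAt (fun r => -((1 - deriv τ t * r) * w x r t))
        ((deriv τ t - k) * w x y t + τ t * pdt w x y t) y := by
    intro y hy
    have hspeed : HasDerivAt (fun r => 1 - deriv τ t * r) (-(deriv τ t * 1)) y :=
      ((hasDerivAt_id y).const_mul (deriv τ t)).const_sub 1
    have heq := htransport y (Set.uIcc_of_le (zero_le_one' ℝ) ▸ hy)
    rw [delayTransport] at heq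
    refine (hspeed.mul (hasDerivAt_pdy (hw.differentiable one_ne_zero _))).neg.congr_deriv ?_
    linear_combination -heq
  have hflux := integral_eq_sub_of_hasDerivAt flux_deriv
    ((hw_int.const_mul _).add (hpdt_int.const_mul _))
  rw [integral_add (hw_int.const_mul _) (hpdt_int.const_mul _),
    intervalIntegral.integral_const_mul, intervalIntegral.integral_const_mul] at hflux
  linear_combination hflux

theorem hasDerivAt_delayFunctional {κ L : ℝ} (ξ : ℝ) (hτ : DifferentiableAt ℝ τ t)
    (hw : ContDiff ℝ 1 fun q : ℝ × ℝ × ℝ => w q.1 q.2.1 q.2.2)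
    (htransport : ∀ x ∈ Set.uIcc 0 L, ∀ y ∈ Set.Icc (0 : ℝ) 1,
      delayTransport τ w x y t = -κ * τ t * w x y t) :
    HasDerivAt (delayFunctional ξ L τ w)
      (-κ * delayFunctional ξ L τ w t + ξ * (∫ x in (0 : ℝ)..L, w x 0 t)
        - ξ * (1 - deriv τ t) * ∫ x in (0 : ℝ)..L, w x 1 t) t := by
  have integrable_section {u : ℝ → ℝ → ℝ → ℝ}
      (hu : Continuous fun q : ℝ × ℝ × ℝ => u q.1 q.2.1 q.2.2) :
      IntervalIntegrable (fun x => ∫ y in (0 : ℝ)..1, u x y t) volume 0 L :=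
    ((continuous_integral_second_variable hu 0 1).comp (.prodMk_right t)).intervalIntegrable 0 L
  have integrable_trace (y : ℝ) : IntervalIntegrable (fun x => w x y t) volume 0 L :=
    (hw.continuous.comp (f := fun x : ℝ => (x, y, t)) (by fun_prop)).intervalIntegrable 0 L
  have hw_int := integrable_section hw.continuous
  have hpdt_int := integrable_section (continuous_pdt hw)
  have balance := integral_congr (μ := volume) fun x hx =>
    integral_balance_of_delayTransport hw (htransport x hx)
  rw [integral_add (hw_int.const_mul _) (hpdt_int.const_mul _),
    integral_sub ((hw_int.const_mul _).add (integrable_trace 0)) ((integrable_trace 1).const_mul _),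
    integral_add (hw_int.const_mul _) (integrable_trace 0)] at balance
  simp only [intervalIntegral.integral_const_mul] at balance
  refine ((hτ.hasDerivAt.const_mul ξ).mul
    (hasDerivAt_integral_integral_pdt hw 0 L 0 1 t)).congr_deriv ?_
  rw [delayFunctional]
  linear_combination ξ * balance

end Balance

section DelayDensity

variable {τ : ℝ → ℝ} {z : ℝ → ℝ → ℝ → ℝ}

theorem contDiff_delayDensity {n : WithTop ℕ∞} (κ : ℝ) (hτ : ContDiff ℝ n τ)
    (hz : ContDiff ℝ n fun q : ℝ × ℝ × ℝ => z q.1 q.2.1 q.2.2) :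
    ContDiff ℝ n fun q : ℝ × ℝ × ℝ => delayDensity κ τ z q.1 q.2.1 q.2.2 := by
  unfold delayDensity
  fun_prop

theorem pdt_delayDensity (κ : ℝ) {x y t : ℝ} (hτ : DifferentiableAt ℝ τ t)
    (hz : DifferentiableAt ℝ (fun q : ℝ × ℝ × ℝ => z q.1 q.2.1 q.2.2) (x, y, t)) :
    pdt (delayDensity κ τ z) x y t =
      Real.exp (-κ * τ t * y) * (2 * z x y t * pdt z x y t - κ * deriv τ t * y * z x y t ^ 2) := by
  have hexp := ((hτ.hasDerivAt.const_mul (-κ)).mul_const y).exp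
  refine (hexp.mul ((hasDerivAt_pdt hz).pow 2)).deriv.trans ?_
  simp only [Pi.pow_apply]
  ring

theorem pdy_delayDensity (κ : ℝ) (τ : ℝ → ℝ) {x y t : ℝ}
    (hz : DifferentiableAt ℝ (fun q : ℝ × ℝ × ℝ => z q.1 q.2.1 q.2.2) (x, y, t)) :
    pdy (delayDensity κ τ z) x y t =
      Real.exp (-κ * τ t * y) * (2 * z x y t * pdy z x y t - κ * τ t * z x y t ^ 2) := by
  have hexp := ((hasDerivAt_id y).const_mul (-κ * τ t)).exp
  refine (hexp.mul ((hasDerivAt_pdy hz).pow 2)).deriv.trans ?_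
  simp only [Pi.pow_apply, id]
  ring

theorem delayTransport_delayDensity (κ : ℝ) {x y t : ℝ} (hτ : DifferentiableAt ℝ τ t)
    (hz : DifferentiableAt ℝ (fun q : ℝ × ℝ × ℝ => z q.1 q.2.1 q.2.2) (x, y, t))
    (htransport : delayTransport τ z x y t = 0) :
    delayTransport τ (delayDensity κ τ z) x y t = -κ * τ t * delayDensity κ τ z x y t := by
  rw [delayTransport] at htransport
  rw [delayTransport, pdt_delayDensity κ hτ hz, pdy_delayDensity κ τ hz, delayDensity]
  linear_combination 2 * Real.exp (-κ * τ t * y) * z x y t * htransport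

end DelayDensity

theorem functional_J_estimate_general {κ ξ L t : ℝ} {τ h : ℝ → ℝ} {z : ℝ → ℝ → ℝ → ℝ}
    (hL : 0 ≤ L) (hξ : 0 ≤ ξ) (hτ : ContDiff ℝ 1 τ) (hτ' : deriv τ t ≤ 1)
    (hz : ContDiff ℝ 1 fun q : ℝ × ℝ × ℝ => z q.1 q.2.1 q.2.2)
    (htransport : ∀ x ∈ Set.Icc 0 L, ∀ y ∈ Set.Icc (0 : ℝ) 1, delayTransport τ z x y t = 0)
    (hinflow : ∀ x ∈ Set.Icc 0 L, z x 0 t = h x) :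
    ∃ D : ℝ, HasDerivAt (delayFunctional ξ L τ (delayDensity κ τ z)) D t ∧
      D ≤ -κ * delayFunctional ξ L τ (delayDensity κ τ z) t + ξ * ∫ x in (0 : ℝ)..L, h x ^ 2 := by
  rw [← Set.uIcc_of_le hL] at htransport hinflow
  have hτt : DifferentiableAt ℝ τ t := hτ.differentiable one_ne_zero t
  refine ⟨_, hasDerivAt_delayFunctional ξ hτt (contDiff_delayDensity κ hτ hz) fun x hx y hy =>
    delayTransport_delayDensity κ hτt (hz.differentiable one_ne_zero _) (htransport x hx y hy), ?_⟩
  have inflow : ∫ x in (0 : ℝ)..L, delayDensity κ τ z x 0 t = ∫ x in (0 : ℝ)..L, h x ^ 2 :=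
    integral_congr fun x hx => by simp [delayDensity, hinflow x hx]
  have outflow_nonneg : 0 ≤ ∫ x in (0 : ℝ)..L, delayDensity κ τ z x 1 t :=
    integral_nonneg hL fun x _ => by unfold delayDensity; positivity
  rw [inflow]
  exact sub_le_self _ (mul_nonneg (mul_nonneg hξ (sub_nonneg.2 hτ')) outflow_nonneg)

/-- Lemma 4.5: the functional `J(t) = ξ̄τ(t)∫₀^L∫₀^1 e^{−2τ(t)y} z² dy dx` satisfies
`J'(t) ≤ −2J(t) + ξ̄∫₀^L v_t² dx`. -/
theorem functional_J_estimate
    (ρ μ α₁ β γ L τ₀ τ₁ d δ : ℝ)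
    (hρ : 0 < ρ) (hμ : 0 < μ) (hα₁ : 0 < α₁) (hβ : 0 < β) (hγ : 0 < γ) (hL : 0 < L)
    (hτ₀ : 0 < τ₀) (hd : d < 1) (hδ0 : 0 < δ) (hδ : δ < Real.sqrt (1 - d))
    (τ μ₁ μ₂ : ℝ → ℝ)
    -- (A1)
    (hτC1 : ContDiff ℝ 1 τ)
    (hτbd : ∀ t, 0 ≤ t → τ₀ ≤ τ t ∧ τ t ≤ τ₁)
    (hτ' : ∀ t, 0 ≤ t → deriv τ t ≤ d)
    -- (A2)
    (hμ₁C1 : ContDiff ℝ 1 μ₁)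
    (hμ₁pos : ∀ t, 0 ≤ t → 0 < μ₁ t)
    (hμ₁dec : ∀ s t, 0 ≤ s → s ≤ t → μ₁ t ≤ μ₁ s)
    -- (A3)
    (hμ₂C1 : ContDiff ℝ 1 μ₂)
    (hμ₂bd : ∀ t, 0 ≤ t → |μ₂ t| ≤ δ * μ₁ t)
    -- classical solution
    (v p : ℝ → ℝ → ℝ) (z : ℝ → ℝ → ℝ → ℝ)
    (hv : ContDiff ℝ 2 fun q : ℝ × ℝ => v q.1 q.2)
    (hp : ContDiff ℝ 2 fun q : ℝ × ℝ => p q.1 q.2)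
    (hzC1 : ContDiff ℝ 1 fun q : ℝ × ℝ × ℝ => z q.1 q.2.1 q.2.2)
    (heq1 : ∀ x ∈ Set.Icc (0:ℝ) L, ∀ t, 0 ≤ t →
      ρ * pd2 (pd2 v) x t - (α₁ + γ ^ 2 * β) * pd1 (pd1 v) x t
        + γ * β * pd1 (pd1 p) x t + μ₁ t * pd2 v x t + μ₂ t * z x 1 t = 0)
    (heq2 : ∀ x ∈ Set.Icc (0:ℝ) L, ∀ t, 0 ≤ t →
      μ * pd2 (pd2 p) x t - β * pd1 (pd1 p) x t + γ * β * pd1 (pd1 v) x t = 0)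
    (heq3 : ∀ x ∈ Set.Icc (0:ℝ) L, ∀ y ∈ Set.Icc (0:ℝ) 1, ∀ t, 0 ≤ t →
      τ t * pdt z x y t + (1 - deriv τ t * y) * pdy z x y t = 0)
    (hcomp : ∀ x ∈ Set.Icc (0:ℝ) L, ∀ t, 0 ≤ t → z x 0 t = pd2 v x t)
    (hbc : ∀ t, 0 ≤ t → v 0 t = 0 ∧ p 0 t = 0 ∧ pd1 v L t = 0 ∧ pd1 p L t = 0)
    (ξbar : ℝ) (hξbar : 0 < ξbar) :
    let J : ℝ → ℝ := fun s =>
      ξbar * τ s * ∫ x in (0:ℝ)..L, ∫ y in (0:ℝ)..1, Real.exp (-2 * τ s * y) * (z x y s) ^ 2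
    ∀ t, 0 < t →
      ∃ D : ℝ, HasDerivAt J D t ∧
        D ≤ -2 * J t + ξbar * ∫ x in (0:ℝ)..L, (pd2 v x t) ^ 2 := by
  intro _ t ht
  exact functional_J_estimate_general hL.le hξbar.le hτC1 ((hτ' t ht.le).trans hd.le) hzC1
    (fun x hx y hy => heq3 x hx y hy t ht.le) fun x hx => hcomp x hx t ht.le
end

section
/- Let (v,p,z) be a classical solution of the piezoelectric beam system with magnetic effect and time-varying delay, under assumptions (A1)–(A3), with ξ̄ ∈ (δ/√(1−d), 2 − δ/√(1−d)), ξ(t) := ξ̄μ₁(t), and assume in addition μ₁(t) ≥ m₀ > 0 for all t ≥ 0. Fix positive constants N₁, N₂, N₃ and define the Lyapunov functional 𝓛(t) := N·E(t) + N₁I₁(t) + N₂I₂(t) + N₃I₃(t) + J(t), where I₁(t) = ρ∫₀^L v·v_t dx + γμ∫₀^L v·p_t dx, I₂(t) = ρ∫₀^L v_t(γv − p) dx + γμ∫₀^L p_t(γv − p) dx, I₃(t) = ρ∫₀^L v_t·v dx + μ∫₀^L p_t·p dx, and J(t) = ξ̄τ(t)∫₀^L∫₀^1 e^{−2τ(t)y}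 z² dy dx. Then there exists a constant γ₃ > 0, independent of N and of t, such that |𝓛(t) − N·E(t)| ≤ γ₃·E(t) for all t ≥ 0; consequently, for every N > γ₃, (N − γ₃)E(t) ≤ 𝓛(t) ≤ (N + γ₃)E(t) for all t ≥ 0. -/
/-!
The estimate is made at a fixed time, with constants uniform over all states of the beam. Writing
`w = γv - p`, the functionals `I₁`, `I₂`, `I₃` are linear combinations of the pairings of `v` and
`w` with `vₜ` and `pₜ` in `L²(0, L)`. By Cauchy-Schwarz each pairing is controlled by squared
norms; those of the velocities are part of the kinetic energy, and those of `v` and `w`, which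
vanish at `0`, are bounded through Friedrichs' inequality by those of `v_x` and `w_x`, which are
part of the potential energy. Finally `e^{-2τy} ≤ 1` gives `J ≤ ξ̄ τ ‖z‖²`, which is
`2 / μ₁ ≤ 2 / m₀` times the delay part of the energy.

Uniformity over states is written with the Landau notation along the filters `⊤` and
`𝓟 {S | m₀ ≤ S.μ₁}`.
-/

open MeasureTheory intervalIntegral

open Asymptotics Filter

theorem sq_integral_mul_le {α : Type*} [MeasurableSpace α] {ν : Measure α} {f g : α → ℝ}
    (hf : MemLp f 2 ν) (hg : MemLp g 2 ν) :
    (∫ x, f x * g x ∂ν) ^ 2 ≤ (∫ x, f x ^ 2 ∂ν) * ∫ x, g x ^ 2 ∂ν := by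
  have inner_toLp {u w : α → ℝ} (hu : MemLp u 2 ν) (hw : MemLp w 2 ν) :
      inner ℝ (hu.toLp u) (hw.toLp w) = ∫ x, u x * w x ∂ν := by
    rw [L2.inner_def]
    refine integral_congr_ae ?_
    filter_upwards [hu.coeFn_toLp, hw.coeFn_toLp] with x hux hwx
    simp [hux, hwx, mul_comm]
  simpa only [inner_toLp, ← sq] using real_inner_mul_inner_self_le (hf.toLp f) (hg.toLp g)

theorem sq_intervalIntegral_mul_le {a b : ℝ} {f g : ℝ → ℝ} (hf : ContinuousOn f (Set.uIcc a b))
    (hg : ContinuousOn g (Set.uIcc a b)) :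
    (∫ x in a..b, f x * g x) ^ 2 ≤ (∫ x in a..b, f x ^ 2) * ∫ x in a..b, g x ^ 2 := by
  have memLp {u : ℝ → ℝ} (hu : ContinuousOn u (Set.uIcc a b)) :
      MemLp u 2 (volume.restrict (Set.uIoc a b)) := by
    have hmeas : AEStronglyMeasurable u (volume.restrict (Set.uIoc a b)) :=
      (hu.mono Set.uIoc_subset_uIcc).aestronglyMeasurable measurableSet_uIoc
    exact (memLp_two_iff_integrable_sq hmeas).2 (hu.pow 2).intervalIntegrable.def'
  have h := sq_integral_mul_le (memLp hf) (memLp hg)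
  simp only [intervalIntegral.intervalIntegral_eq_integral_uIoc]
  split_ifs <;> simpa using h

theorem abs_intervalIntegral_mul_le {a b : ℝ} {f g : ℝ → ℝ}
    (hf : ContinuousOn f (Set.uIcc a b)) (hg : ContinuousOn g (Set.uIcc a b)) :
    |∫ x in a..b, f x * g x| ≤ (|∫ x in a..b, f x ^ 2| + |∫ x in a..b, g x ^ 2|) / 2 := by
  refine abs_le_of_sq_le_sq ?_ (by positivity)
  have h := (sq_intervalIntegral_mul_le hf hg).trans (le_abs_self _)
  rw [abs_mul] at h
  linarith [four_mul_le_sq_add |∫ x in a..b, f x ^ 2| |∫ x in a..b, g x ^ 2|]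

theorem integral_sq_le_mul_integral_deriv_sq {a b : ℝ} {f f' : ℝ → ℝ} (hab : a ≤ b)
    (hf : ContinuousOn f (Set.Icc a b)) (hderiv : ∀ x ∈ Set.Ioo a b, HasDerivAt f (f' x) x)
    (hf' : ContinuousOn f' (Set.Icc a b)) (hfa : f a = 0) :
    ∫ x in a..b, f x ^ 2 ≤ (b - a) ^ 2 / 2 * ∫ x in a..b, f' x ^ 2 := by
  have hpoint : ∀ x ∈ Set.Icc a b, f x ^ 2 ≤ (x - a) * ∫ y in a..b, f' y ^ 2 := by
    intro x hx
    have hsub : Set.Icc a x ⊆ Set.Icc a b := Set.Icc_subset_Icc_right hx.2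
    have hf'x : ContinuousOn f' (Set.uIcc a x) := by
      rw [Set.uIcc_of_le hx.1]
      exact hf'.mono hsub
    have hftc : ∫ y in a..x, 1 * f' y = f x := by
      simp only [one_mul]
      rw [integral_eq_sub_of_hasDerivAt_of_le hx.1 (hf.mono hsub)
        (fun y hy => hderiv y (Set.Ioo_subset_Ioo_right hx.2 hy)) hf'x.intervalIntegrable,
        hfa, sub_zero]
    calc f x ^ 2 = (∫ y in a..x, 1 * f' y) ^ 2 := by rw [hftc]
      _ ≤ (∫ _ in a..x, (1 : ℝ) ^ 2) * ∫ y in a..x, f' y ^ 2 :=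
        sq_intervalIntegral_mul_le continuousOn_const hf'x
      _ = (x - a) * ∫ y in a..x, f' y ^ 2 := by simp
      _ ≤ (x - a) * ∫ y in a..b, f' y ^ 2 := by
        refine mul_le_mul_of_nonneg_left ?_ (sub_nonneg.2 hx.1)
        exact integral_mono_interval le_rfl hx.1 hx.2 (.of_forall fun _ => sq_nonneg _)
          ((hf'.pow 2).intervalIntegrable_of_Icc hab)
  calc ∫ x in a..b, f x ^ 2 ≤ ∫ x in a..b, (x - a) * ∫ y in a..b, f' y ^ 2 :=
        integral_mono_on hab ((hf.pow 2).intervalIntegrable_of_Icc hab)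
          (Continuous.intervalIntegrable (by fun_prop) _ _) hpoint
    _ = (b - a) ^ 2 / 2 * ∫ x in a..b, f' x ^ 2 := by
      simp [intervalIntegral.integral_comp_sub_right (fun x => x)]

theorem integral_integral_mono_on {a b c d : ℝ} {f g : ℝ → ℝ → ℝ} (hab : a ≤ b) (hcd : c ≤ d)
    (hf : Continuous (Function.uncurry f)) (hg : Continuous (Function.uncurry g))
    (h : ∀ x ∈ Set.Icc a b, ∀ y ∈ Set.Icc c d, f x y ≤ g x y) :
    ∫ x in a..b, ∫ y in c..d, f x y ≤ ∫ x in a..b, ∫ y in c..d, g x y := by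
  have inner_intervalIntegrable {u : ℝ → ℝ → ℝ} (hu : Continuous (Function.uncurry u)) :
      IntervalIntegrable (fun x => ∫ y in c..d, u x y) volume a b :=
    (continuous_parametric_intervalIntegral_of_continuous' hu c d).intervalIntegrable _ _
  exact integral_mono_on hab (inner_intervalIntegrable hf) (inner_intervalIntegrable hg)
    fun x hx => integral_mono_on hcd ((hf.uncurry_left x).intervalIntegrable _ _)
      ((hg.uncurry_left x).intervalIntegrable _ _) (h x hx)

theorem continuous_pd2 {v : ℝ → ℝ → ℝ} (hv : ContDiff ℝ 1 fun q : ℝ × ℝ => v q.1 q.2) (t : ℝ) :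
    Continuous fun x => pd2 v x t :=
  (Continuous.fderiv_one hv continuous_const).clm_apply continuous_const

theorem isBigO_intervalIntegral_mul {ι : Type*} {l : Filter ι} {a b : ℝ} {f g : ι → ℝ → ℝ}
    {e : ι → ℝ} (hf : ∀ i, ContinuousOn (f i) (Set.uIcc a b))
    (hg : ∀ i, ContinuousOn (g i) (Set.uIcc a b))
    (hfe : (fun i => ∫ x in a..b, f i x ^ 2) =O[l] e)
    (hge : (fun i => ∫ x in a..b, g i x ^ 2) =O[l] e) :
    (fun i => ∫ x in a..b, f i x * g i x) =O[l] e := by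
  refine IsBigO.trans (.of_norm_le fun i => ?_)
    ((hfe.abs_left.add hge.abs_left).const_mul_left (1 / 2))
  have h := abs_intervalIntegral_mul_le (hf i) (hg i)
  rw [Real.norm_eq_abs]
  linarith

theorem isBigO_integral_sq_integral_deriv_sq {ι : Type*} {l : Filter ι} {a b : ℝ}
    {f : ι → ℝ → ℝ} (hab : a ≤ b) (hf : ∀ i, ContDiff ℝ 1 (f i)) (hfa : ∀ i, f i a = 0) :
    (fun i => ∫ x in a..b, f i x ^ 2) =O[l] fun i => ∫ x in a..b, deriv (f i) x ^ 2 := by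
  refine .of_bound ((b - a) ^ 2 / 2) (.of_forall fun i => ?_)
  have integral_sq_nonneg (u : ℝ → ℝ) : 0 ≤ ∫ x in a..b, u x ^ 2 :=
    integral_nonneg hab fun _ _ => sq_nonneg _
  rw [Real.norm_of_nonneg (integral_sq_nonneg _), Real.norm_of_nonneg (integral_sq_nonneg _)]
  exact integral_sq_le_mul_integral_deriv_sq hab (hf i).continuous.continuousOn
    (fun x _ => ((hf i).differentiable one_ne_zero x).hasDerivAt)
    (hf i).continuous_deriv_one.continuousOn (hfa i)

/-- The constants of the piezoelectric beam, together with the weight `ξ` (the paper's `ξ̄`) of the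
delay term in its energy. -/
structure PiezoBeam where
  (ρ μ α₁ β γ L ξ : ℝ)
  ρ_pos : 0 < ρ
  μ_pos : 0 < μ
  α₁_pos : 0 < α₁
  β_pos : 0 < β
  L_nonneg : 0 ≤ L
  ξ_nonneg : 0 ≤ ξ

/-- The data of a solution at a single time: the fields `v`, `p`, their velocities `vₜ`, `pₜ`, the
delay variable `z`, and the values of the delay `τ` and of the damping coefficient `μ₁`. The
velocities are data of their own, since a state carries no time dependence. -/
structure BeamState where
  (v p vₜ pₜ : ℝ → ℝ)
  z : ℝ → ℝ → ℝ
  (τ μ₁ : ℝ)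
  contDiff_v : ContDiff ℝ 1 v
  contDiff_p : ContDiff ℝ 1 p
  continuous_vₜ : Continuous vₜ
  continuous_pₜ : Continuous pₜ
  continuous_z : Continuous (Function.uncurry z)
  τ_nonneg : 0 ≤ τ
  v_zero : v 0 = 0
  p_zero : p 0 = 0

/-- The state at time `t` of a classical solution. -/
noncomputable def BeamState.atTime {v p : ℝ → ℝ → ℝ} {z : ℝ → ℝ → ℝ → ℝ}
    (hv : ContDiff ℝ 1 fun q : ℝ × ℝ => v q.1 q.2) (hp : ContDiff ℝ 1 fun q : ℝ × ℝ => p q.1 q.2)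
    (hz : Continuous fun q : ℝ × ℝ × ℝ => z q.1 q.2.1 q.2.2) (t : ℝ) {τ : ℝ} (hτ : 0 ≤ τ) (μ₁ : ℝ)
    (hv₀ : v 0 t = 0) (hp₀ : p 0 t = 0) : BeamState where
  v x := v x t
  p x := p x t
  vₜ x := pd2 v x t
  pₜ x := pd2 p x t
  z x y := z x y t
  τ := τ
  μ₁ := μ₁
  contDiff_v := hv.comp (contDiff_id.prodMk contDiff_const)
  contDiff_p := hp.comp (contDiff_id.prodMk contDiff_const)
  continuous_vₜ := continuous_pd2 hv t
  continuous_pₜ := continuous_pd2 hp t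
  continuous_z := hz.comp (continuous_fst.prodMk (continuous_snd.prodMk continuous_const))
  τ_nonneg := hτ
  v_zero := hv₀
  p_zero := hp₀

namespace PiezoBeam

variable (B : PiezoBeam)

/-- Twice the density of the kinetic and potential energy. -/
noncomputable def energyDensity (S : BeamState) (x : ℝ) : ℝ :=
  B.ρ * S.vₜ x ^ 2 + B.μ * S.pₜ x ^ 2 + B.α₁ * deriv S.v x ^ 2
    + B.β * (B.γ * deriv S.v x - deriv S.p x) ^ 2

/-- The kinetic and potential energy of the beam. -/
noncomputable def mechanicalEnergy (S : BeamState) : ℝ :=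
  (1 / 2) * ∫ x in (0:ℝ)..B.L, B.energyDensity S x

/-- The combination `γv - p`, whose gradient carries the `β`-part of the energy. -/
def couplingField (S : BeamState) (x : ℝ) : ℝ := B.γ * S.v x - S.p x

/-- The squared `L²` norm of the delay variable on `(0, L) × (0, 1)`. -/
noncomputable def delayNormSq (S : BeamState) : ℝ :=
  ∫ x in (0:ℝ)..B.L, ∫ y in (0:ℝ)..1, S.z x y ^ 2

/-- The total energy `E`. -/
noncomputable def energy (S : BeamState) : ℝ :=
  B.mechanicalEnergy S + (B.ξ * S.μ₁ * S.τ / 2) * B.delayNormSq S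

/-- The multiplier functional `I₁`. -/
noncomputable def I₁ (S : BeamState) : ℝ :=
  B.ρ * (∫ x in (0:ℝ)..B.L, S.v x * S.vₜ x) + B.γ * B.μ * ∫ x in (0:ℝ)..B.L, S.v x * S.pₜ x

/-- The multiplier functional `I₂`. -/
noncomputable def I₂ (S : BeamState) : ℝ :=
  B.ρ * (∫ x in (0:ℝ)..B.L, S.vₜ x * B.couplingField S x)
    + B.γ * B.μ * ∫ x in (0:ℝ)..B.L, S.pₜ x * B.couplingField S x

/-- The multiplier functional `I₃`. -/
noncomputable def I₃ (S : BeamState) : ℝ :=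
  B.ρ * (∫ x in (0:ℝ)..B.L, S.vₜ x * S.v x) + B.μ * ∫ x in (0:ℝ)..B.L, S.pₜ x * S.p x

/-- The exponentially weighted delay functional `J`. -/
noncomputable def J (S : BeamState) : ℝ :=
  B.ξ * S.τ * ∫ x in (0:ℝ)..B.L, ∫ y in (0:ℝ)..1, Real.exp (-2 * S.τ * y) * S.z x y ^ 2

/-- The difference `𝓛 - N E`, which does not depend on `N`. -/
noncomputable def lyapunovCorrection (N₁ N₂ N₃ : ℝ) (S : BeamState) : ℝ :=
  N₁ * B.I₁ S + N₂ * B.I₂ S + N₃ * B.I₃ S + B.J S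

/-- The Lyapunov functional `𝓛`. -/
noncomputable def lyapunov (N N₁ N₂ N₃ : ℝ) (S : BeamState) : ℝ :=
  N * B.energy S + N₁ * B.I₁ S + N₂ * B.I₂ S + N₃ * B.I₃ S + B.J S

theorem lyapunov_sub_energy (N N₁ N₂ N₃ : ℝ) (S : BeamState) :
    B.lyapunov N N₁ N₂ N₃ S - N * B.energy S = B.lyapunovCorrection N₁ N₂ N₃ S := by
  unfold lyapunov lyapunovCorrection
  ring

theorem summands_le_energyDensity (S : BeamState) (x : ℝ) :
    B.ρ * S.vₜ x ^ 2 ≤ B.energyDensity S x ∧ B.μ * S.pₜ x ^ 2 ≤ B.energyDensity S x ∧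
      B.α₁ * deriv S.v x ^ 2 ≤ B.energyDensity S x ∧
        B.β * (B.γ * deriv S.v x - deriv S.p x) ^ 2 ≤ B.energyDensity S x := by
  have hvt := mul_nonneg B.ρ_pos.le (sq_nonneg (S.vₜ x))
  have hpt := mul_nonneg B.μ_pos.le (sq_nonneg (S.pₜ x))
  have hvx := mul_nonneg B.α₁_pos.le (sq_nonneg (deriv S.v x))
  have hwx := mul_nonneg B.β_pos.le (sq_nonneg (B.γ * deriv S.v x - deriv S.p x))
  unfold energyDensity
  refine ⟨?_, ?_, ?_, ?_⟩ <;> linarith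

theorem continuous_energyDensity (S : BeamState) : Continuous (B.energyDensity S) := by
  have hvx := S.contDiff_v.continuous_deriv_one
  have hpx := S.contDiff_p.continuous_deriv_one
  have hvt := S.continuous_vₜ
  have hpt := S.continuous_pₜ
  unfold energyDensity
  fun_prop

theorem mechanicalEnergy_nonneg (S : BeamState) : 0 ≤ B.mechanicalEnergy S :=
  mul_nonneg (by norm_num) <| integral_nonneg B.L_nonneg fun x _ =>
    (mul_nonneg B.ρ_pos.le (sq_nonneg _)).trans (B.summands_le_energyDensity S x).1

theorem delayNormSq_nonneg (S : BeamState) : 0 ≤ B.delayNormSq S :=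
  integral_nonneg B.L_nonneg fun _ _ => integral_nonneg zero_le_one fun _ _ => sq_nonneg _

theorem delayEnergy_nonneg {S : BeamState} (hμ₁ : 0 ≤ S.μ₁) :
    0 ≤ (B.ξ * S.μ₁ * S.τ / 2) * B.delayNormSq S := by
  have := B.ξ_nonneg
  have := S.τ_nonneg
  have := B.delayNormSq_nonneg S
  positivity

theorem mechanicalEnergy_le_energy {S : BeamState} (hμ₁ : 0 ≤ S.μ₁) :
    B.mechanicalEnergy S ≤ B.energy S :=
  le_add_of_nonneg_right (B.delayEnergy_nonneg hμ₁)

theorem energy_nonneg {S : BeamState} (hμ₁ : 0 ≤ S.μ₁) : 0 ≤ B.energy S :=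
  (B.mechanicalEnergy_nonneg S).trans (B.mechanicalEnergy_le_energy hμ₁)

theorem isBigO_integral_sq_mechanicalEnergy {f : BeamState → ℝ → ℝ} {c : ℝ} (hc : 0 < c)
    (hf : ∀ S, Continuous (f S)) (h : ∀ S x, c * f S x ^ 2 ≤ B.energyDensity S x) :
    (fun S => ∫ x in (0:ℝ)..B.L, f S x ^ 2) =O[⊤] B.mechanicalEnergy := by
  refine .of_bound (2 / c) (.of_forall fun S => ?_)
  rw [Real.norm_of_nonneg (integral_nonneg B.L_nonneg fun _ _ => sq_nonneg _),
    Real.norm_of_nonneg (B.mechanicalEnergy_nonneg S), div_mul_eq_mul_div, le_div_iff₀' hc]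
  calc c * ∫ x in (0:ℝ)..B.L, f S x ^ 2 = ∫ x in (0:ℝ)..B.L, c * f S x ^ 2 :=
        (intervalIntegral.integral_const_mul c _).symm
    _ ≤ ∫ x in (0:ℝ)..B.L, B.energyDensity S x :=
        integral_mono_on B.L_nonneg
          (((hf S).pow 2).const_mul c |>.intervalIntegrable _ _)
          ((B.continuous_energyDensity S).intervalIntegrable _ _) fun x _ => h S x
    _ = 2 * B.mechanicalEnergy S := by unfold mechanicalEnergy; ring

theorem isBigO_integral_vₜ_sq :
    (fun S : BeamState => ∫ x in (0:ℝ)..B.L, S.vₜ x ^ 2) =O[⊤] B.mechanicalEnergy :=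
  B.isBigO_integral_sq_mechanicalEnergy B.ρ_pos BeamState.continuous_vₜ
    fun S x => (B.summands_le_energyDensity S x).1

theorem isBigO_integral_pₜ_sq :
    (fun S : BeamState => ∫ x in (0:ℝ)..B.L, S.pₜ x ^ 2) =O[⊤] B.mechanicalEnergy :=
  B.isBigO_integral_sq_mechanicalEnergy B.μ_pos BeamState.continuous_pₜ
    fun S x => (B.summands_le_energyDensity S x).2.1

theorem isBigO_integral_v_sq :
    (fun S : BeamState => ∫ x in (0:ℝ)..B.L, S.v x ^ 2) =O[⊤] B.mechanicalEnergy :=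
  (isBigO_integral_sq_integral_deriv_sq B.L_nonneg BeamState.contDiff_v BeamState.v_zero).trans <|
    B.isBigO_integral_sq_mechanicalEnergy B.α₁_pos (fun S => S.contDiff_v.continuous_deriv_one)
      fun S x => (B.summands_le_energyDensity S x).2.2.1

theorem contDiff_couplingField (S : BeamState) : ContDiff ℝ 1 (B.couplingField S) :=
  (contDiff_const.mul S.contDiff_v).sub S.contDiff_p

theorem deriv_couplingField (S : BeamState) (x : ℝ) :
    deriv (B.couplingField S) x = B.γ * deriv S.v x - deriv S.p x :=
  (((S.contDiff_v.differentiable one_ne_zero x).hasDerivAt.const_mul B.γ).sub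
    (S.contDiff_p.differentiable one_ne_zero x).hasDerivAt).deriv

theorem isBigO_integral_couplingField_sq :
    (fun S => ∫ x in (0:ℝ)..B.L, B.couplingField S x ^ 2) =O[⊤] B.mechanicalEnergy := by
  refine (isBigO_integral_sq_integral_deriv_sq B.L_nonneg B.contDiff_couplingField
    fun S => by simp [couplingField, S.v_zero, S.p_zero]).trans ?_
  refine B.isBigO_integral_sq_mechanicalEnergy B.β_pos
    (fun S => (B.contDiff_couplingField S).continuous_deriv_one) fun S x => ?_
  rw [deriv_couplingField]
  exact (B.summands_le_energyDensity S x).2.2.2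

theorem isBigO_integral_v_mul_vₜ :
    (fun S : BeamState => ∫ x in (0:ℝ)..B.L, S.v x * S.vₜ x) =O[⊤] B.mechanicalEnergy :=
  isBigO_intervalIntegral_mul (fun S => S.contDiff_v.continuous.continuousOn)
    (fun S => S.continuous_vₜ.continuousOn) B.isBigO_integral_v_sq B.isBigO_integral_vₜ_sq

theorem isBigO_integral_v_mul_pₜ :
    (fun S : BeamState => ∫ x in (0:ℝ)..B.L, S.v x * S.pₜ x) =O[⊤] B.mechanicalEnergy :=
  isBigO_intervalIntegral_mul (fun S => S.contDiff_v.continuous.continuousOn)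
    (fun S => S.continuous_pₜ.continuousOn) B.isBigO_integral_v_sq B.isBigO_integral_pₜ_sq

theorem isBigO_integral_vₜ_mul_couplingField :
    (fun S => ∫ x in (0:ℝ)..B.L, S.vₜ x * B.couplingField S x) =O[⊤] B.mechanicalEnergy :=
  isBigO_intervalIntegral_mul (fun S => S.continuous_vₜ.continuousOn)
    (fun S => (B.contDiff_couplingField S).continuous.continuousOn)
    B.isBigO_integral_vₜ_sq B.isBigO_integral_couplingField_sq

theorem isBigO_integral_pₜ_mul_couplingField :
    (fun S => ∫ x in (0:ℝ)..B.L, S.pₜ x * B.couplingField S x) =O[⊤] B.mechanicalEnergy :=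
  isBigO_intervalIntegral_mul (fun S => S.continuous_pₜ.continuousOn)
    (fun S => (B.contDiff_couplingField S).continuous.continuousOn)
    B.isBigO_integral_pₜ_sq B.isBigO_integral_couplingField_sq

theorem isBigO_I₁_mechanicalEnergy : B.I₁ =O[⊤] B.mechanicalEnergy :=
  (B.isBigO_integral_v_mul_vₜ.const_mul_left _).add (B.isBigO_integral_v_mul_pₜ.const_mul_left _)

theorem isBigO_I₂_mechanicalEnergy : B.I₂ =O[⊤] B.mechanicalEnergy :=
  (B.isBigO_integral_vₜ_mul_couplingField.const_mul_left _).add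
    (B.isBigO_integral_pₜ_mul_couplingField.const_mul_left _)

theorem integral_pₜ_mul_p (S : BeamState) :
    ∫ x in (0:ℝ)..B.L, S.pₜ x * S.p x =
      B.γ * (∫ x in (0:ℝ)..B.L, S.v x * S.pₜ x)
        - ∫ x in (0:ℝ)..B.L, S.pₜ x * B.couplingField S x := by
  have hv := S.contDiff_v.continuous
  have hw := (B.contDiff_couplingField S).continuous
  have hpt := S.continuous_pₜ
  rw [← intervalIntegral.integral_const_mul, ← intervalIntegral.integral_sub]
  · refine integral_congr fun x _ => ?_
    simp only [couplingField]
    ring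
  all_goals exact Continuous.intervalIntegrable (by fun_prop) _ _

theorem isBigO_I₃_mechanicalEnergy : B.I₃ =O[⊤] B.mechanicalEnergy := by
  unfold I₃
  simp only [integral_pₜ_mul_p, mul_comm (BeamState.vₜ _ _)]
  exact (B.isBigO_integral_v_mul_vₜ.const_mul_left _).add
    (((B.isBigO_integral_v_mul_pₜ.const_mul_left _).sub
      B.isBigO_integral_pₜ_mul_couplingField).const_mul_left _)

theorem J_nonneg (S : BeamState) : 0 ≤ B.J S :=
  mul_nonneg (mul_nonneg B.ξ_nonneg S.τ_nonneg) <| integral_nonneg B.L_nonneg fun _ _ =>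
    integral_nonneg zero_le_one fun _ _ => by positivity

theorem J_le_mul_delayNormSq (S : BeamState) : B.J S ≤ B.ξ * S.τ * B.delayNormSq S := by
  refine mul_le_mul_of_nonneg_left ?_ (mul_nonneg B.ξ_nonneg S.τ_nonneg)
  have hz := S.continuous_z
  refine integral_integral_mono_on B.L_nonneg zero_le_one (by fun_prop) (by fun_prop)
    fun x _ y hy => mul_le_of_le_one_left (sq_nonneg _) (Real.exp_le_one_iff.2 ?_)
  linarith [mul_nonneg S.τ_nonneg hy.1]

theorem isBigO_J_energy {m₀ : ℝ} (hm₀ : 0 < m₀) :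
    B.J =O[𝓟 {S | m₀ ≤ S.μ₁}] B.energy := by
  refine isBigO_principal.2 ⟨2 / m₀, fun S hS => ?_⟩
  have hμ₁ : 0 ≤ S.μ₁ := hm₀.le.trans hS
  rw [Real.norm_of_nonneg (B.J_nonneg S), Real.norm_of_nonneg (B.energy_nonneg hμ₁),
    div_mul_eq_mul_div, le_div_iff₀' hm₀]
  calc m₀ * B.J S ≤ S.μ₁ * (B.ξ * S.τ * B.delayNormSq S) :=
        mul_le_mul hS (B.J_le_mul_delayNormSq S) (B.J_nonneg S) hμ₁
    _ = 2 * (B.ξ * S.μ₁ * S.τ / 2 * B.delayNormSq S) := by ring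
    _ ≤ 2 * B.energy S := by
      gcongr
      exact le_add_of_nonneg_left (B.mechanicalEnergy_nonneg S)

theorem isBigO_mechanicalEnergy_energy {m₀ : ℝ} (hm₀ : 0 ≤ m₀) :
    B.mechanicalEnergy =O[𝓟 {S | m₀ ≤ S.μ₁}] B.energy :=
  .of_bound' <| eventually_principal.2 fun S hS => by
    have hμ₁ : 0 ≤ S.μ₁ := hm₀.trans hS
    rw [Real.norm_of_nonneg (B.mechanicalEnergy_nonneg S),
      Real.norm_of_nonneg (B.energy_nonneg hμ₁)]
    exact B.mechanicalEnergy_le_energy hμ₁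

theorem isBigO_lyapunovCorrection_energy (N₁ N₂ N₃ : ℝ) {m₀ : ℝ} (hm₀ : 0 < m₀) :
    B.lyapunovCorrection N₁ N₂ N₃ =O[𝓟 {S | m₀ ≤ S.μ₁}] B.energy := by
  have of_mechanicalEnergy {F : BeamState → ℝ} (hF : F =O[⊤] B.mechanicalEnergy) (N : ℝ) :
      (fun S => N * F S) =O[𝓟 {S | m₀ ≤ S.μ₁}] B.energy :=
    ((hF.mono le_top).trans (B.isBigO_mechanicalEnergy_energy hm₀.le)).const_mul_left N
  exact (((of_mechanicalEnergy B.isBigO_I₁_mechanicalEnergy N₁).add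
    (of_mechanicalEnergy B.isBigO_I₂_mechanicalEnergy N₂)).add
    (of_mechanicalEnergy B.isBigO_I₃_mechanicalEnergy N₃)).add (B.isBigO_J_energy hm₀)

end PiezoBeam

theorem lyapunov_energy_equivalence_general (B : PiezoBeam) (N₁ N₂ N₃ : ℝ) {m₀ : ℝ}
    (hm₀ : 0 < m₀) :
    ∃ γ₃ > 0, ∀ (N : ℝ) (S : BeamState), m₀ ≤ S.μ₁ →
      |B.lyapunov N N₁ N₂ N₃ S - N * B.energy S| ≤ γ₃ * B.energy S ∧
        (N - γ₃) * B.energy S ≤ B.lyapunov N N₁ N₂ N₃ S ∧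
          B.lyapunov N N₁ N₂ N₃ S ≤ (N + γ₃) * B.energy S := by
  obtain ⟨γ₃, hγ₃, hbound⟩ := (B.isBigO_lyapunovCorrection_energy N₁ N₂ N₃ hm₀).exists_pos
  refine ⟨γ₃, hγ₃, fun N S hS => ?_⟩
  have habs : |B.lyapunov N N₁ N₂ N₃ S - N * B.energy S| ≤ γ₃ * B.energy S := by
    have h := isBigOWith_principal.1 hbound S hS
    rwa [Real.norm_of_nonneg (B.energy_nonneg (hm₀.le.trans hS)), Real.norm_eq_abs,
      ← B.lyapunov_sub_energy N] at h
  obtain ⟨hupper, hlower⟩ := abs_sub_le_iff.1 habs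
  exact ⟨habs, by linarith, by linarith⟩

/-- Equivalence of the Lyapunov functional `𝓛 = N·E + N₁I₁ + N₂I₂ + N₃I₃ + J` with the
energy: there is `γ₃ > 0`, independent of `N` and `t`, with `|𝓛(t) − N·E(t)| ≤ γ₃E(t)`,
hence `(N − γ₃)E(t) ≤ 𝓛(t) ≤ (N + γ₃)E(t)` for every `N > γ₃`. -/
theorem lyapunov_energy_equivalence
    (ρ μ α₁ β γ L τ₀ τ₁ d δ : ℝ)
    (hρ : 0 < ρ) (hμ : 0 < μ) (hα₁ : 0 < α₁) (hβ : 0 < β) (hγ : 0 < γ) (hL : 0 < L)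
    (hτ₀ : 0 < τ₀) (hd : d < 1) (hδ0 : 0 < δ) (hδ : δ < Real.sqrt (1 - d))
    (τ μ₁ μ₂ : ℝ → ℝ)
    -- (A1)
    (hτC1 : ContDiff ℝ 1 τ)
    (hτbd : ∀ t, 0 ≤ t → τ₀ ≤ τ t ∧ τ t ≤ τ₁)
    (hτ' : ∀ t, 0 ≤ t → deriv τ t ≤ d)
    -- (A2)
    (hμ₁C1 : ContDiff ℝ 1 μ₁)
    (hμ₁pos : ∀ t, 0 ≤ t → 0 < μ₁ t)
    (hμ₁dec : ∀ s t, 0 ≤ s → s ≤ t → μ₁ t ≤ μ₁ s)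
    -- (A3)
    (hμ₂C1 : ContDiff ℝ 1 μ₂)
    (hμ₂bd : ∀ t, 0 ≤ t → |μ₂ t| ≤ δ * μ₁ t)
    -- classical solution
    (v p : ℝ → ℝ → ℝ) (z : ℝ → ℝ → ℝ → ℝ)
    (hv : ContDiff ℝ 2 fun q : ℝ × ℝ => v q.1 q.2)
    (hp : ContDiff ℝ 2 fun q : ℝ × ℝ => p q.1 q.2)
    (hzC1 : ContDiff ℝ 1 fun q : ℝ × ℝ × ℝ => z q.1 q.2.1 q.2.2)
    (heq1 : ∀ x ∈ Set.Icc (0:ℝ) L, ∀ t, 0 ≤ t →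
      ρ * pd2 (pd2 v) x t - (α₁ + γ ^ 2 * β) * pd1 (pd1 v) x t
        + γ * β * pd1 (pd1 p) x t + μ₁ t * pd2 v x t + μ₂ t * z x 1 t = 0)
    (heq2 : ∀ x ∈ Set.Icc (0:ℝ) L, ∀ t, 0 ≤ t →
      μ * pd2 (pd2 p) x t - β * pd1 (pd1 p) x t + γ * β * pd1 (pd1 v) x t = 0)
    (heq3 : ∀ x ∈ Set.Icc (0:ℝ) L, ∀ y ∈ Set.Icc (0:ℝ) 1, ∀ t, 0 ≤ t →
      τ t * pdt z x y t + (1 - deriv τ t * y) * pdy z x y t = 0)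
    (hcomp : ∀ x ∈ Set.Icc (0:ℝ) L, ∀ t, 0 ≤ t → z x 0 t = pd2 v x t)
    (hbc : ∀ t, 0 ≤ t → v 0 t = 0 ∧ p 0 t = 0 ∧ pd1 v L t = 0 ∧ pd1 p L t = 0)
    (ξbar : ℝ)
    (hξ1 : δ / Real.sqrt (1 - d) < ξbar) (hξ2 : ξbar < 2 - δ / Real.sqrt (1 - d))
    (m₀ : ℝ) (hm₀ : 0 < m₀) (hμ₁lb : ∀ t, 0 ≤ t → m₀ ≤ μ₁ t)
    (N₁ N₂ N₃ : ℝ) (hN₁ : 0 < N₁) (hN₂ : 0 < N₂) (hN₃ : 0 < N₃) :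
    let E : ℝ → ℝ := fun s =>
      (1 / 2) * (∫ x in (0:ℝ)..L,
          (ρ * (pd2 v x s) ^ 2 + μ * (pd2 p x s) ^ 2 + α₁ * (pd1 v x s) ^ 2
            + β * (γ * pd1 v x s - pd1 p x s) ^ 2))
        + (ξbar * μ₁ s * τ s / 2) * ∫ x in (0:ℝ)..L, ∫ y in (0:ℝ)..1, (z x y s) ^ 2
    let I₁ : ℝ → ℝ := fun s =>
      ρ * (∫ x in (0:ℝ)..L, v x s * pd2 v x s) + γ * μ * ∫ x in (0:ℝ)..L, v x s * pd2 p x s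
    let I₂ : ℝ → ℝ := fun s =>
      ρ * (∫ x in (0:ℝ)..L, pd2 v x s * (γ * v x s - p x s))
        + γ * μ * ∫ x in (0:ℝ)..L, pd2 p x s * (γ * v x s - p x s)
    let I₃ : ℝ → ℝ := fun s =>
      ρ * (∫ x in (0:ℝ)..L, pd2 v x s * v x s) + μ * ∫ x in (0:ℝ)..L, pd2 p x s * p x s
    let J : ℝ → ℝ := fun s =>
      ξbar * τ s * ∫ x in (0:ℝ)..L, ∫ y in (0:ℝ)..1, Real.exp (-2 * τ s * y) * (z x y s) ^ 2
    let 𝓛 : ℝ → ℝ → ℝ := fun N s => N * E s + N₁ * I₁ s + N₂ * I₂ s + N₃ * I₃ s + J s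
    ∃ γ₃ > 0,
      (∀ N : ℝ, ∀ t, 0 ≤ t → |𝓛 N t - N * E t| ≤ γ₃ * E t) ∧
      ∀ N : ℝ, γ₃ < N → ∀ t, 0 ≤ t →
        (N - γ₃) * E t ≤ 𝓛 N t ∧ 𝓛 N t ≤ (N + γ₃) * E t := by
  intro E I₁ I₂ I₃ J 𝓛
  have hξ : 0 ≤ ξbar := (div_nonneg hδ0.le (Real.sqrt_nonneg _)).trans hξ1.le
  obtain ⟨γ₃, hγ₃, h⟩ := lyapunov_energy_equivalence_general
    ⟨ρ, μ, α₁, β, γ, L, ξbar, hρ, hμ, hα₁, hβ, hL.le, hξ⟩ N₁ N₂ N₃ hm₀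
  have hN (N t : ℝ) (ht : 0 ≤ t) := h N (.atTime (hv.of_le one_le_two) (hp.of_le one_le_two)
    hzC1.continuous t (hτ₀.le.trans (hτbd t ht).1) (μ₁ t) (hbc t ht).1 (hbc t ht).2.1)
    (hμ₁lb t ht)
  exact ⟨γ₃, hγ₃, fun N t ht => (hN N t ht).1, fun N _ t ht => (hN N t ht).2⟩
end

section
/- Let 0 < d < 1 and 0 < δ < √(1−d), let ξ̄ satisfy δ/√(1−d) < ξ̄ < 2 − δ/√(1−d), let m₁ > 0 and m₂ be reals with |m₂| ≤ δ·m₁, let r ≤ d, and set ξ := ξ̄·m₁. Then for any L > 0 and any square-integrable functions u, w : [0,L] → ℝ: −m₁∫₀^L u² dx − m₂∫₀^L w·u dx + (ξ/2)∫₀^L u² dx − (ξ(1−r)/2)∫₀^L w² dx ≤ −m₁(1 − ξ̄/2 − δ/(2√(1−d)))∫₀^L u² dx − m₁(ξ̄(1−r)/2 − δ√(1−d)/2)∫₀^L w² dx ≤ 0. -/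
open MeasureTheory intervalIntegral

/-!
With `s = √(1 - d)`, Young's inequality `|⟪x, y⟫| ≤ ‖x‖² / (2s) + s‖y‖² / 2` absorbs the cross term
into the two quadratic terms. This choice of weight makes `δ s = (δ / s) (1 - d)`, so that the lower
bound `δ / s ≤ ξbar` is what the coefficient of the delayed term needs, while the upper bound
`ξbar ≤ 2 - δ / s` is what the coefficient of the velocity term needs.
-/

section WeightedYoung

variable {E : Type*} [NormedAddCommGroup E] [InnerProductSpace ℝ E]

theorem abs_real_inner_le_weighted_sq_add_sq {s : ℝ} (hs : 0 < s) (x y : E) :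
    |inner ℝ x y| ≤ ‖x‖ ^ 2 / (2 * s) + s / 2 * ‖y‖ ^ 2 := by
  have young : 2 * ‖x‖ * ‖y‖ ≤ s⁻¹ * ‖x‖ ^ 2 + s * ‖y‖ ^ 2 := by
    simpa only [inv_inv] using two_mul_le_add_mul_sq (a := ‖x‖) (b := ‖y‖) (inv_pos.mpr hs)
  calc |inner ℝ x y| ≤ ‖x‖ * ‖y‖ := abs_real_inner_le_norm x y
    _ ≤ (s⁻¹ * ‖x‖ ^ 2 + s * ‖y‖ ^ 2) / 2 := by linarith
    _ = ‖x‖ ^ 2 / (2 * s) + s / 2 * ‖y‖ ^ 2 := by ring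

variable {α : Type*} [MeasurableSpace α] {μ : Measure α} {u w : α → E}

theorem abs_integral_inner_le_weighted_sq_add_sq {s : ℝ} (hs : 0 < s)
    (hu : Integrable (fun x => ‖u x‖ ^ 2) μ) (hw : Integrable (fun x => ‖w x‖ ^ 2) μ)
    (huw : Integrable (fun x => inner ℝ (u x) (w x)) μ) :
    |∫ x, inner ℝ (u x) (w x) ∂μ| ≤
      (∫ x, ‖u x‖ ^ 2 ∂μ) / (2 * s) + s / 2 * ∫ x, ‖w x‖ ^ 2 ∂μ :=
  calc |∫ x, inner ℝ (u x) (w x) ∂μ|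
      ≤ ∫ x, |inner ℝ (u x) (w x)| ∂μ := abs_integral_le_integral_abs
    _ ≤ ∫ x, (‖u x‖ ^ 2 / (2 * s) + s / 2 * ‖w x‖ ^ 2) ∂μ :=
        MeasureTheory.integral_mono huw.abs ((hu.div_const _).add (hw.const_mul _)) fun x =>
          abs_real_inner_le_weighted_sq_add_sq hs (u x) (w x)
    _ = (∫ x, ‖u x‖ ^ 2 ∂μ) / (2 * s) + s / 2 * ∫ x, ‖w x‖ ^ 2 ∂μ := by
        rw [MeasureTheory.integral_add (hu.div_const _) (hw.const_mul _),
          MeasureTheory.integral_div, MeasureTheory.integral_const_mul]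

end WeightedYoung

theorem mul_sqrt_le_mul_of_div_sqrt_le {δ ξ a b : ℝ} (hδ : 0 ≤ δ) (ha : 0 ≤ a) (hab : a ≤ b)
    (hξ : δ / √a ≤ ξ) : δ * √a ≤ ξ * b :=
  calc δ * √a = δ / √a * a := by rw [div_mul_eq_mul_div, mul_div_assoc, Real.div_sqrt]
    _ ≤ ξ * b := mul_le_mul hξ hab ha ((div_nonneg hδ (Real.sqrt_nonneg a)).trans hξ)

theorem weighted_young_dissipation_estimate_general
    {E α : Type*} [NormedAddCommGroup E] [InnerProductSpace ℝ E] [MeasurableSpace α]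
    {μ : Measure α} {u w : α → E} {d δ ξbar m₁ m₂ r : ℝ} (hd : d < 1)
    (hξ1 : δ / √(1 - d) ≤ ξbar) (hξ2 : ξbar ≤ 2 - δ / √(1 - d))
    (hm1 : 0 < m₁) (hm2 : |m₂| ≤ δ * m₁) (hr : r ≤ d)
    (hu : Integrable (fun x => ‖u x‖ ^ 2) μ) (hw : Integrable (fun x => ‖w x‖ ^ 2) μ)
    (huw : Integrable (fun x => inner ℝ (u x) (w x)) μ) :
    -m₁ * (∫ x, ‖u x‖ ^ 2 ∂μ) - m₂ * (∫ x, inner ℝ (u x) (w x) ∂μ)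
        + (ξbar * m₁ / 2) * (∫ x, ‖u x‖ ^ 2 ∂μ)
        - (ξbar * m₁ * (1 - r) / 2) * (∫ x, ‖w x‖ ^ 2 ∂μ)
      ≤ -m₁ * (1 - ξbar / 2 - δ / (2 * √(1 - d))) * (∫ x, ‖u x‖ ^ 2 ∂μ)
          - m₁ * (ξbar * (1 - r) / 2 - δ * √(1 - d) / 2) * (∫ x, ‖w x‖ ^ 2 ∂μ) ∧
    -m₁ * (1 - ξbar / 2 - δ / (2 * √(1 - d))) * (∫ x, ‖u x‖ ^ 2 ∂μ)
        - m₁ * (ξbar * (1 - r) / 2 - δ * √(1 - d) / 2) * (∫ x, ‖w x‖ ^ 2 ∂μ) ≤ 0 := by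
  have hδ : 0 ≤ δ := nonneg_of_mul_nonneg_left ((abs_nonneg m₂).trans hm2) hm1
  have one_sub_d_pos : 0 < 1 - d := sub_pos.mpr hd
  have delayed_bound : δ * √(1 - d) ≤ ξbar * (1 - r) :=
    mul_sqrt_le_mul_of_div_sqrt_le hδ one_sub_d_pos.le (sub_le_sub_left hr 1) hξ1
  have young := abs_integral_inner_le_weighted_sq_add_sq (Real.sqrt_pos.mpr one_sub_d_pos) hu hw huw
  have hU : 0 ≤ ∫ x, ‖u x‖ ^ 2 ∂μ := MeasureTheory.integral_nonneg fun x => sq_nonneg ‖u x‖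
  have hW : 0 ≤ ∫ x, ‖w x‖ ^ 2 ∂μ := MeasureTheory.integral_nonneg fun x => sq_nonneg ‖w x‖
  set s := √(1 - d)
  set U := ∫ x, ‖u x‖ ^ 2 ∂μ
  set W := ∫ x, ‖w x‖ ^ 2 ∂μ
  set P := ∫ x, inner ℝ (u x) (w x) ∂μ
  constructor
  · have cross : -(m₂ * P) ≤ δ * m₁ * (U / (2 * s) + s / 2 * W) :=
      calc -(m₂ * P) ≤ |m₂| * |P| := (neg_le_abs _).trans_eq (abs_mul m₂ P)
        _ ≤ δ * m₁ * (U / (2 * s) + s / 2 * W) := by gcongr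
    linear_combination cross
  · have velocity_coeff : 0 ≤ 1 - ξbar / 2 - δ / (2 * s) := by linear_combination hξ2 / 2
    have delayed_coeff : 0 ≤ ξbar * (1 - r) / 2 - δ * s / 2 := by linarith
    have velocity_term := mul_nonneg (mul_nonneg hm1.le velocity_coeff) hU
    have delayed_term := mul_nonneg (mul_nonneg hm1.le delayed_coeff) hW
    linarith

/-- The weighted Young-inequality estimate at the heart of the dissipativity of the
generator and of the energy-dissipation lemma for the piezoelectric beam system
with time-varying delay. -/
theorem weighted_young_dissipation_estimate
    (d δ ξbar m₁ m₂ r : ℝ)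
    (hd0 : 0 < d) (hd1 : d < 1) (hδ0 : 0 < δ) (hδ : δ < Real.sqrt (1 - d))
    (hξ1 : δ / Real.sqrt (1 - d) < ξbar) (hξ2 : ξbar < 2 - δ / Real.sqrt (1 - d))
    (hm1 : 0 < m₁) (hm2 : |m₂| ≤ δ * m₁) (hr : r ≤ d)
    (L : ℝ) (hL : 0 < L) (u w : ℝ → ℝ)
    (hu : IntervalIntegrable (fun x => (u x) ^ 2) volume 0 L)
    (hw : IntervalIntegrable (fun x => (w x) ^ 2) volume 0 L)
    (huw : IntervalIntegrable (fun x => w x * u x) volume 0 L) :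
    -m₁ * (∫ x in (0:ℝ)..L, (u x) ^ 2) - m₂ * (∫ x in (0:ℝ)..L, w x * u x)
        + (ξbar * m₁ / 2) * (∫ x in (0:ℝ)..L, (u x) ^ 2)
        - (ξbar * m₁ * (1 - r) / 2) * (∫ x in (0:ℝ)..L, (w x) ^ 2)
      ≤ -m₁ * (1 - ξbar / 2 - δ / (2 * Real.sqrt (1 - d))) * (∫ x in (0:ℝ)..L, (u x) ^ 2)
          - m₁ * (ξbar * (1 - r) / 2 - δ * Real.sqrt (1 - d) / 2) *
              (∫ x in (0:ℝ)..L, (w x) ^ 2) ∧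
    -m₁ * (1 - ξbar / 2 - δ / (2 * Real.sqrt (1 - d))) * (∫ x in (0:ℝ)..L, (u x) ^ 2)
        - m₁ * (ξbar * (1 - r) / 2 - δ * Real.sqrt (1 - d) / 2) *
            (∫ x in (0:ℝ)..L, (w x) ^ 2) ≤ 0 := by
  simpa [integral_of_le hL.le] using
    weighted_young_dissipation_estimate_general (u := u) (w := w) hd1 hξ1.le hξ2.le hm1 hm2 hr
      (by simpa [IntegrableOn] using hu.1) (by simpa [IntegrableOn] using hw.1)
      (by simpa [IntegrableOn] using huw.1)
end
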